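/- arXiv:2412.00389 — 3 statements merged into one kernel-verified Lean document; each statement's English description precedes it below -/
import Mathlib

section
/- There exists an absolute constant c > 0 with the following property. Let b_1, ..., b_k be distinct integers, a ∈ ℕ, s ∈ ℕ, k ≥ 2, x ≥ 3 real, (log x)^{−9/10} ≤ η ≤ 1, and |b_i| ≤ log x for all 1 ≤ i ≤ k. Set f(b) = (b − b_1)···(b − b_k). If k ≥ log log x or s ≤ k, then Σ_{|b| ≤ η log x, b ≠ b_1, ..., b_k} (a^{k+1}|f(b)| / φ(a^{k+1}|f(b)|))^s ≤ (c · (a/φ(a)) · log k)^s · η·log x, where b runs over integers. -/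
/-- sum of log p / p -/
lemma aux_sum_log_div (n : ℕ) (hn : 1 ≤ n) :
    ∑ p ∈ n.primesLE, Real.log p / p ≤ Real.log n + Real.log 4 := by
  have hn0 : (0:ℝ) < n := by exact_mod_cast hn
  have h1 : ∑ p ∈ n.primesLE, Real.log p * ((n / p : ℕ) : ℝ) ≤ n * Real.log n := by
    have e : ∀ p ∈ n.primesLE, Real.log p * ((n / p : ℕ) : ℝ)
        = ∑ m ∈ Finset.Ioc 0 n, if p ∣ m then Real.log p else 0 := by
      intro p hp
      rw [← Finset.sum_filter, Finset.sum_const, Nat.Ioc_filter_dvd_card_eq_div, nsmul_eq_mul,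
        mul_comm]
    rw [Finset.sum_congr rfl e, Finset.sum_comm]
    have : ∀ m ∈ Finset.Ioc 0 n, (∑ p ∈ n.primesLE, if p ∣ m then Real.log p else 0) ≤ Real.log n := by
      intro m hm
      rw [Finset.mem_Ioc] at hm
      rw [← Finset.sum_filter]
      have hs : n.primesLE.filter (· ∣ m) ⊆ m.primeFactors := by
        intro p hp
        simp only [Finset.mem_filter, Nat.mem_primesLE] at hp
        exact Nat.mem_primeFactors.2 ⟨hp.1.2, hp.2, by omega⟩
      calc _ ≤ ∑ p ∈ m.primeFactors, Real.log p := by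
            apply Finset.sum_le_sum_of_subset_of_nonneg hs
            intro p _ _
            exact Real.log_natCast_nonneg p
        _ = Real.log ((∏ p ∈ m.primeFactors, p : ℕ) : ℝ) := by
            rw [Nat.cast_prod, Real.log_prod]
            intro p hp
            have := (Nat.prime_of_mem_primeFactors hp).pos
            positivity
        _ ≤ Real.log n := by
            apply Real.log_le_log
            · have := Finset.prod_pos (fun p hp => (Nat.prime_of_mem_primeFactors (n := m) hp).pos)
              exact_mod_cast this
            · exact_mod_cast (Nat.le_of_dvd hm.1 (Nat.prod_primeFactors_dvd m)).trans hm.2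
    calc _ ≤ ∑ m ∈ Finset.Ioc 0 n, Real.log n := Finset.sum_le_sum this
      _ = _ := by simp
  have h2 : ∑ p ∈ n.primesLE, Real.log p ≤ Real.log 4 * n := by
    rw [← Chebyshev.theta_eq_sum_primesLE_log]
    exact Chebyshev.theta_le_log4_mul_x hn0.le
  have h3 : n * ∑ p ∈ n.primesLE, Real.log p / p ≤ n * (Real.log n + Real.log 4) := by
    rw [Finset.mul_sum]
    calc _ ≤ ∑ p ∈ n.primesLE, (Real.log p * ((n / p : ℕ) : ℝ) + Real.log p) := by
          apply Finset.sum_le_sum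
          intro p hp
          have hp0 : 0 < p := (Nat.mem_primesLE.1 hp).2.pos
          have : (n:ℝ) / p ≤ ((n / p : ℕ) : ℝ) + 1 := by
            rw [div_le_iff₀ (by exact_mod_cast hp0)]
            have := (Nat.lt_div_mul_add (a := n) hp0).le
            have h : n ≤ (n / p + 1) * p := by nlinarith
            exact_mod_cast h
          have hl := Real.log_natCast_nonneg p
          calc (n:ℝ) * (Real.log p / p) = Real.log p * (n / p) := by ring
            _ ≤ Real.log p * (((n / p : ℕ) : ℝ) + 1) := by gcongr
            _ = _ := by ring
      _ ≤ _ := by rw [Finset.sum_add_distrib]; linarith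
  exact le_of_mul_le_mul_left h3 hn0

lemma aux_zeta (σ : ℝ) (hσ : 0 < σ) (n : ℕ) :
    ∑ i ∈ Finset.range (n+1), ((i:ℝ) ^ (1 + σ))⁻¹ ≤ 1 + 1 / σ := by
  have key : ∀ n : ℕ, ∑ i ∈ Finset.range (n+2), ((i:ℝ) ^ (1 + σ))⁻¹ ≤
      1 + 1 / σ - ((n+1:ℝ) ^ (-σ)) / σ := by
    intro n
    induction n with
    | zero =>
      simp [Finset.sum_range_succ, Real.zero_rpow (by positivity : 1 + σ ≠ 0)]
    | succ n ih =>
      rw [Finset.sum_range_succ]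
      have hx : (0:ℝ) < n + 2 := by positivity
      have h1 : ((n:ℝ)+1) ^ (-σ) ≥ (n+2:ℝ)^(-σ) * (1 + σ / (n+2)) := by
        have e : (n:ℝ)+1 = (n+2) * (1 - 1/(n+2)) := by field_simp; ring
        have hpos : (0:ℝ) < 1 - 1/(n+2) := by
          rw [sub_pos, div_lt_one hx]; linarith [Nat.cast_nonneg (α := ℝ) n]
        rw [e, Real.mul_rpow hx.le hpos.le]
        gcongr
        rw [Real.rpow_def_of_pos hpos]
        have := Real.log_le_sub_one_of_pos hpos
        have h2 : σ / (n+2) ≤ Real.log (1 - 1/(n+2)) * -σ := by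
          have : σ / (n+2) = σ * (1/(n+2)) := by ring
          rw [this]; nlinarith
        linarith [Real.add_one_le_exp (Real.log (1 - 1/((n:ℝ)+2)) * -σ)]
      have h2 : (((n + 2 : ℕ):ℝ) ^ (1 + σ))⁻¹ = (n+2:ℝ)^(-σ) / (n+2) := by
        push_cast
        rw [Real.rpow_add hx, Real.rpow_neg hx.le, Real.rpow_one]
        field_simp
      rw [h2]
      push_cast
      have h3 : (n:ℝ) + 1 + 1 = n + 2 := by ring
      rw [h3]
      have h4 : ((n:ℝ)+1) ^ (-σ) / σ ≥ (n+2:ℝ)^(-σ) / σ + (n+2:ℝ)^(-σ) / (n+2) := by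
        have : (n+2:ℝ)^(-σ) / σ + (n+2:ℝ)^(-σ) / (n+2) = (n+2:ℝ)^(-σ) * (1 + σ / (n+2)) / σ := by
          field_simp
        rw [this]
        gcongr
      linarith
  have h := key n
  have h2 : ∑ i ∈ Finset.range (n+1), ((i:ℝ) ^ (1 + σ))⁻¹ ≤ ∑ i ∈ Finset.range (n+2), ((i:ℝ) ^ (1 + σ))⁻¹ := by
    apply Finset.sum_le_sum_of_subset_of_nonneg
    · exact Finset.range_mono (by omega)
    · intros; positivity
  have : 0 ≤ ((n+1:ℝ) ^ (-σ)) / σ := by positivity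
  linarith

/-- Euler factor product -/
noncomputable def auxR (S : Finset ℕ) : ℝ := ∏ p ∈ S, (1 - (p:ℝ)⁻¹)⁻¹

lemma aux_fac_bounds {p : ℕ} (hp : 2 ≤ p) :
    1 ≤ (1 - (p:ℝ)⁻¹)⁻¹ ∧ (1 - (p:ℝ)⁻¹)⁻¹ ≤ Real.exp (((p:ℝ) - 1)⁻¹) := by
  have h : (2:ℝ) ≤ p := by exact_mod_cast hp
  have e : (1 - (p:ℝ)⁻¹)⁻¹ = 1 + ((p:ℝ)-1)⁻¹ := by
    have : (p:ℝ) - 1 ≠ 0 := by linarith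
    have h0 : (p:ℝ) ≠ 0 := by linarith
    have : 1 - (p:ℝ)⁻¹ ≠ 0 := by
      rw [show 1 - (p:ℝ)⁻¹ = (p - 1) / p by field_simp]
      positivity
    field_simp
    ring
  have h2 : 0 ≤ ((p:ℝ)-1)⁻¹ := inv_nonneg.2 (by linarith)
  rw [e]
  constructor
  · linarith
  · linarith [Real.add_one_le_exp ((p:ℝ)-1)⁻¹]

lemma aux_mertens (n : ℕ) (hn : 2 ≤ n) :
    auxR n.primesLE ≤ 3 * Real.exp 5 * Real.log n := by
  have hn2 : (2:ℝ) ≤ n := by exact_mod_cast hn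
  have hlog2 := Real.log_two_gt_d9
  have hl2 : Real.log 2 ≤ Real.log n := Real.log_le_log (by norm_num) hn2
  have hl : 0 < Real.log n := by linarith
  set σ : ℝ := (Real.log n)⁻¹ with hσdef
  have hσ : 0 < σ := inv_pos.2 hl
  let f : ℕ →* ℝ :=
    { toFun := fun i => ((i:ℝ) ^ (1 + σ))⁻¹
      map_one' := by simp
      map_mul' := by
        intro x y
        push_cast
        rw [Real.mul_rpow (by positivity) (by positivity), mul_inv] }
  have hfv : ∀ i, f i = ((i:ℝ) ^ (1 + σ))⁻¹ := fun i => rfl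
  have hsum : Summable f := Real.summable_nat_rpow_inv.2 (by linarith)
  have hf0 : ∀ i, 0 ≤ f i := fun i => by rw [hfv]; positivity
  have h1 : ∏ p ∈ n.primesLE, (1 - f p)⁻¹ ≤ 1 + Real.log n := by
    have := EulerProduct.prod_primesBelow_geometric_eq_tsum_smoothNumbers hsum (n+1)
    have e : n.primesLE = (n+1).primesBelow := rfl
    rw [e, this]
    refine (Summable.tsum_subtype_le _ _ hf0 hsum).trans ?_
    apply Real.tsum_le_of_sum_range_le hf0
    intro m
    have h := aux_zeta σ hσ m
    have h' : ∑ i ∈ Finset.range m, f i ≤ ∑ i ∈ Finset.range (m+1), f i := by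
      rw [Finset.sum_range_succ]; linarith [hf0 m]
    have : 1 / σ = Real.log n := by simp [hσdef]
    rw [this] at h
    exact h'.trans h
  have h2 : ∑ p ∈ n.primesLE, f p ≤ Real.log (1 + Real.log n) := by
    rw [Real.le_log_iff_exp_le (by linarith), Real.exp_sum]
    refine le_trans ?_ h1
    apply Finset.prod_le_prod
    · intros; positivity
    · intro p hp
      have hp2 : 2 ≤ p := (Nat.mem_primesLE.1 hp).2.two_le
      have hlt : f p < 1 := by
        rw [hfv]
        apply inv_lt_one_of_one_lt₀
        apply Real.one_lt_rpow
        · exact_mod_cast hp2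
        · linarith
      have := Real.add_one_le_exp (-(f p))
      rw [Real.exp_neg] at this
      rw [← inv_inv (Real.exp (f p))]
      apply inv_anti₀ <;> linarith
  have h3 : ∀ p ∈ n.primesLE, ((p:ℝ)-1)⁻¹ ≤ f p + σ * (Real.log p / p) + 2 * ((p:ℝ)^2)⁻¹ := by
    intro p hp
    have hp2 : 2 ≤ p := (Nat.mem_primesLE.1 hp).2.two_le
    have hp2' : (2:ℝ) ≤ p := by exact_mod_cast hp2
    have hp0 : (0:ℝ) < p := by linarith
    have a1 : ((p:ℝ)-1)⁻¹ ≤ (p:ℝ)⁻¹ + 2 * ((p:ℝ)^2)⁻¹ := by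
      have : (p:ℝ)⁻¹ + 2 * ((p:ℝ)^2)⁻¹ = (p + 2) / p^2 := by field_simp
      rw [this, ← one_div, div_le_div_iff₀ (by linarith) (by positivity)]
      nlinarith
    have a2 : (p:ℝ)⁻¹ ≤ f p + σ * (Real.log p / p) := by
      rw [hfv, Real.rpow_add hp0, Real.rpow_one, Real.rpow_def_of_pos hp0, mul_inv, ← Real.exp_neg]
      have := Real.add_one_le_exp (-(Real.log p * σ))
      have h0 : 0 ≤ (p:ℝ)⁻¹ := by positivity
      calc (p:ℝ)⁻¹ = (p:ℝ)⁻¹ * (-(Real.log p * σ) + 1) + σ * (Real.log p / p) := by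
            field_simp; ring
        _ ≤ _ := by gcongr
    linarith
  have h4 : ∑ p ∈ n.primesLE, ((p:ℝ)^2)⁻¹ ≤ 2/2 := by
    have : n.primesLE ⊆ Finset.Ioo 1 (n+1) := by
      intro p hp
      have := Nat.mem_primesLE.1 hp
      have := this.2.two_le
      simp; omega
    refine (Finset.sum_le_sum_of_subset_of_nonneg this (by intros; positivity)).trans ?_
    have := sum_Ioo_inv_sq_le (α := ℝ) 1 (n+1)
    norm_num at this ⊢
    exact this
  have h5 : σ * ∑ p ∈ n.primesLE, Real.log p / p ≤ 3 := by
    have := aux_sum_log_div n (by omega)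
    have h4 : Real.log 4 = 2 * Real.log 2 := by
      rw [show (4:ℝ) = 2^2 by norm_num, Real.log_pow]; norm_num
    rw [hσdef, inv_mul_le_iff₀ hl]
    linarith
  have h6 : auxR n.primesLE ≤ Real.exp (∑ p ∈ n.primesLE, ((p:ℝ)-1)⁻¹) := by
    rw [Real.exp_sum]
    apply Finset.prod_le_prod
    · intro p hp
      linarith [(aux_fac_bounds (Nat.mem_primesLE.1 hp).2.two_le).1]
    · intro p hp
      exact (aux_fac_bounds (Nat.mem_primesLE.1 hp).2.two_le).2
  have h7 : ∑ p ∈ n.primesLE, ((p:ℝ)-1)⁻¹ ≤ Real.log (1 + Real.log n) + 5 := by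
    refine (Finset.sum_le_sum h3).trans ?_
    rw [Finset.sum_add_distrib, Finset.sum_add_distrib, ← Finset.mul_sum, ← Finset.mul_sum]
    linarith
  refine h6.trans ((Real.exp_le_exp.2 h7).trans ?_)
  rw [Real.exp_add, Real.exp_log (by linarith)]
  have : 1 + Real.log n ≤ 3 * Real.log n := by linarith
  nlinarith [Real.exp_pos 5]

lemma auxR_one_le {S : Finset ℕ} (hS : ∀ p ∈ S, 2 ≤ p) : 1 ≤ auxR S :=
  Finset.one_le_prod (fun p hp => (aux_fac_bounds (hS p hp)).1)

lemma auxR_nonneg {S : Finset ℕ} (hS : ∀ p ∈ S, 2 ≤ p) : 0 ≤ auxR S :=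
  zero_le_one.trans (auxR_one_le hS)

lemma auxR_mono {S T : Finset ℕ} (h : S ⊆ T) (hT : ∀ p ∈ T, 2 ≤ p) : auxR S ≤ auxR T := by
  unfold auxR
  rw [← Finset.prod_sdiff h]
  have h1 : 1 ≤ auxR (T \ S) := auxR_one_le (fun p hp => hT p (Finset.sdiff_subset hp))
  have h2 : 0 ≤ auxR S := auxR_nonneg (fun p hp => hT p (h hp))
  unfold auxR at h1 h2
  nlinarith

lemma auxR_union {S T : Finset ℕ} (hS : ∀ p ∈ S, 2 ≤ p) (hT : ∀ p ∈ T, 2 ≤ p) :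
    auxR (S ∪ T) ≤ auxR S * auxR T := by
  have h : auxR (S ∪ T) = auxR S * auxR (T \ S) := by
    unfold auxR
    rw [← Finset.union_sdiff_self_eq_union, Finset.prod_union Finset.disjoint_sdiff]
  rw [h]
  exact mul_le_mul_of_nonneg_left (auxR_mono Finset.sdiff_subset hT) (auxR_nonneg hS)

lemma auxR_tail {S : Finset ℕ} {y : ℕ} (hy : 1 ≤ y) (hS : ∀ p ∈ S, y < p)
    (hc : (S.card : ℝ) ≤ 3 * y) : auxR S ≤ Real.exp 3 := by
  have hy0 : (0:ℝ) < y := by exact_mod_cast hy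
  calc auxR S ≤ ∏ p ∈ S, Real.exp ((y:ℝ)⁻¹) := by
        apply Finset.prod_le_prod
        · intro p hp
          have := hS p hp
          linarith [(aux_fac_bounds (p := p) (by omega)).1]
        · intro p hp
          have := hS p hp
          refine (aux_fac_bounds (p := p) (by omega)).2.trans ?_
          apply Real.exp_le_exp.2
          apply inv_anti₀ hy0
          have : (y:ℝ) + 1 ≤ p := by exact_mod_cast this
          linarith
    _ = Real.exp (S.card * (y:ℝ)⁻¹) := by rw [Finset.prod_const, Real.exp_nat_mul]
    _ ≤ _ := by
        apply Real.exp_le_exp.2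
        rw [← div_eq_mul_inv, div_le_iff₀ hy0]; exact hc

lemma aux_ratio (n : ℕ) (hn : 0 < n) : (n:ℝ) / (Nat.totient n : ℝ) = auxR n.primeFactors := by
  have h := Nat.totient_eq_mul_prod_factors n
  have h2 : (Nat.totient n : ℝ) = n * ∏ p ∈ n.primeFactors, (1 - (p:ℝ)⁻¹) := by
    have := congrArg (fun q : ℚ => (q : ℝ)) h
    push_cast at this
    exact this
  have hn0 : (n:ℝ) ≠ 0 := by positivity
  rw [h2, auxR, Finset.prod_inv_distrib]
  rw [div_mul_eq_div_div, div_self hn0, one_div]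

lemma aux_card_primeFactors (n : ℕ) (hn : 0 < n) :
    (n.primeFactors.card : ℝ) * Real.log 2 ≤ Real.log n := by
  have h : 2 ^ n.primeFactors.card ≤ n := by
    calc 2 ^ n.primeFactors.card ≤ ∏ p ∈ n.primeFactors, p :=
          Finset.pow_card_le_prod _ _ _ (fun p hp => (Nat.prime_of_mem_primeFactors hp).two_le)
      _ ≤ n := Nat.le_of_dvd hn (Nat.prod_primeFactors_dvd n)
  rw [← Real.log_pow]
  apply Real.log_le_log (by positivity)
  exact_mod_cast h

lemma aux_card_f (k : ℕ) (b : Fin k → ℤ) (m : ℤ) (L : ℝ) (hL : 1 ≤ L) (hm : |(m:ℝ)| ≤ L)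
    (hb : ∀ i, |(b i : ℝ)| ≤ L) (hne : ∀ i, m ≠ b i) :
    ((∏ i, (m - b i)).natAbs.primeFactors.card : ℝ) * Real.log 2 ≤
      k * (Real.log 2 + Real.log L) := by
  have hsub : (∏ i, (m - b i)).natAbs.primeFactors ⊆
      Finset.univ.biUnion (fun i => (m - b i).natAbs.primeFactors) := by
    intro p hp
    rw [Nat.mem_primeFactors] at hp
    obtain ⟨h1, h2, h3⟩ := hp
    rw [← Int.natCast_dvd] at h2
    obtain ⟨i, -, hi⟩ := (Prime.dvd_finsetProd_iff (Nat.prime_iff_prime_int.1 h1) _).1 h2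
    rw [Finset.mem_biUnion]
    refine ⟨i, Finset.mem_univ _, Nat.mem_primeFactors.2 ⟨h1, Int.natCast_dvd.1 hi, ?_⟩⟩
    rw [Int.natAbs_ne_zero, sub_ne_zero]
    exact hne i
  have hc : ((∏ i, (m - b i)).natAbs.primeFactors.card : ℝ) ≤
      ∑ i, ((m - b i).natAbs.primeFactors.card : ℝ) := by
    exact_mod_cast (Finset.card_le_card hsub).trans Finset.card_biUnion_le
  have hl2 : 0 < Real.log 2 := Real.log_pos (by norm_num)
  calc _ ≤ (∑ i, ((m - b i).natAbs.primeFactors.card : ℝ)) * Real.log 2 := by gcongr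
    _ = ∑ i, ((m - b i).natAbs.primeFactors.card : ℝ) * Real.log 2 := Finset.sum_mul _ _ _
    _ ≤ ∑ i : Fin k, (Real.log 2 + Real.log L) := by
        apply Finset.sum_le_sum
        intro i _
        have hpos : 0 < (m - b i).natAbs := by
          rw [Int.natAbs_pos, sub_ne_zero]; exact hne i
        refine (aux_card_primeFactors _ hpos).trans ?_
        rw [← Real.log_mul (by norm_num) (by linarith)]
        apply Real.log_le_log (by exact_mod_cast hpos)
        have : (((m - b i).natAbs : ℕ) : ℝ) = |(m:ℝ) - b i| := by
          rw [Nat.cast_natAbs]; push_cast; rfl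
        rw [this]
        have := abs_sub (m:ℝ) (b i)
        linarith [hb i]
    _ = _ := by simp; ring

lemma aux_count_res (N d : ℕ) (hd : 0 < d) (S : Finset ℤ) (hS : S ⊆ Finset.Icc (-(N:ℤ)) N)
    (h : ∀ m ∈ S, ∀ m' ∈ S, (d:ℤ) ∣ m - m') : (S.card : ℝ) ≤ (2 * N + 1) / d + 1 := by
  have hd0 : (0:ℝ) < d := by exact_mod_cast hd
  rcases S.eq_empty_or_nonempty with rfl | ⟨m0, hm0⟩
  · simp; positivity
  have hsub : S ⊆ (Finset.Ioc (-(N:ℤ) - 1) N).filter (fun x => x ≡ m0 [ZMOD (d:ℤ)]) := by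
    intro m hm
    have := Finset.mem_Icc.1 (hS hm)
    rw [Finset.mem_filter, Finset.mem_Ioc]
    refine ⟨by omega, ?_⟩
    exact Int.modEq_iff_dvd.2 (h m0 hm0 m hm)
  have h1 := Finset.card_le_card hsub
  have h2 := Int.Ioc_filter_modEq_card (-(N:ℤ) - 1) N (r := (d:ℤ)) (by exact_mod_cast hd) m0
  have h3 : (S.card : ℤ) ≤ max (⌊(((N:ℤ):ℚ) - (m0:ℚ)) / ((d:ℤ):ℚ)⌋ -
      ⌊(((-(N:ℤ) - 1 : ℤ):ℚ) - (m0:ℚ)) / ((d:ℤ):ℚ)⌋) 0 := by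
    rw [← h2]; exact_mod_cast h1
  have hdq : (0:ℚ) < d := by exact_mod_cast hd
  have h4 : (S.card : ℚ) ≤ (2 * N + 1) / d + 1 := by
    rcases le_max_iff.1 h3 with h3 | h3
    · have h5 := Int.floor_le ((((N:ℤ):ℚ) - (m0:ℚ)) / ((d:ℤ):ℚ))
      have h6 := (Int.lt_floor_add_one ((((-(N:ℤ) - 1 : ℤ):ℚ) - (m0:ℚ)) / ((d:ℤ):ℚ))).le
      have h7 : (S.card : ℚ) ≤ (⌊(((N:ℤ):ℚ) - (m0:ℚ)) / ((d:ℤ):ℚ)⌋ : ℚ) -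
        (⌊(((-(N:ℤ) - 1 : ℤ):ℚ) - (m0:ℚ)) / ((d:ℤ):ℚ)⌋ : ℚ) := by exact_mod_cast h3
      have h8 : (2 * (N:ℚ) + 1) / d = (((N:ℤ):ℚ) - (m0:ℚ)) / ((d:ℤ):ℚ) -
          (((-(N:ℤ) - 1 : ℤ):ℚ) - (m0:ℚ)) / ((d:ℤ):ℚ) := by
        push_cast; field_simp; ring
      linarith
    · have : (S.card : ℚ) ≤ 0 := by exact_mod_cast h3
      have : (0:ℚ) ≤ (2 * N + 1) / d := by positivity
      linarith
  have := (Rat.cast_le (K := ℝ)).2 h4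
  push_cast at this
  exact this

lemma aux_count (k : ℕ) (b : Fin k → ℤ) (N : ℕ) (T : Finset ℕ) (hT : ∀ p ∈ T, p.Prime) :
    (((Finset.Icc (-(N:ℤ)) N).filter (fun m => ∀ p ∈ T, (p:ℤ) ∣ ∏ i, (m - b i))).card : ℝ) ≤
      (k:ℝ) ^ T.card * ((2 * N + 1) / (∏ p ∈ T, (p:ℝ)) + 1) := by
  classical
  have hsub : (Finset.Icc (-(N:ℤ)) N).filter (fun m => ∀ p ∈ T, (p:ℤ) ∣ ∏ i, (m - b i)) ⊆
      (Finset.univ : Finset (T → Fin k)).biUnion (fun g =>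
        (Finset.Icc (-(N:ℤ)) N).filter (fun m => ∀ p : T, ((p:ℕ):ℤ) ∣ m - b (g p))) := by
    intro m hm
    rw [Finset.mem_filter] at hm
    have : ∀ p : T, ∃ i, ((p:ℕ):ℤ) ∣ m - b i := by
      intro p
      obtain ⟨i, -, hi⟩ := (Prime.dvd_finsetProd_iff (Nat.prime_iff_prime_int.1 (hT p p.2)) _).1
        (hm.2 p p.2)
      exact ⟨i, hi⟩
    choose g hg using this
    rw [Finset.mem_biUnion]
    exact ⟨g, Finset.mem_univ _, Finset.mem_filter.2 ⟨hm.1, hg⟩⟩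
  have hc : (((Finset.Icc (-(N:ℤ)) N).filter
      (fun m => ∀ p ∈ T, (p:ℤ) ∣ ∏ i, (m - b i))).card : ℝ) ≤
      ∑ g : T → Fin k, (((Finset.Icc (-(N:ℤ)) N).filter
        (fun m => ∀ p : T, ((p:ℕ):ℤ) ∣ m - b (g p))).card : ℝ) := by
    exact_mod_cast (Finset.card_le_card hsub).trans Finset.card_biUnion_le
  refine hc.trans ?_
  calc _ ≤ ∑ g : T → Fin k, (((2:ℝ) * N + 1) / (∏ p ∈ T, (p:ℝ)) + 1) := by
        apply Finset.sum_le_sum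
        intro g _
        have := aux_count_res N (∏ p ∈ T, p) (Finset.prod_pos (fun p hp => (hT p hp).pos))
          ((Finset.Icc (-(N:ℤ)) N).filter (fun m => ∀ p : T, ((p:ℕ):ℤ) ∣ m - b (g p)))
          (Finset.filter_subset _ _) ?_
        · push_cast at this; exact this
        · intro m hm m' hm'
          rw [Finset.mem_filter] at hm hm'
          rw [Int.natCast_dvd]
          apply Finset.prod_primes_dvd
          · intro p hp; exact (hT p hp).prime
          · intro p hp
            rw [← Int.natCast_dvd]
            have := dvd_sub (hm.2 ⟨p, hp⟩) (hm'.2 ⟨p, hp⟩)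
            simpa using this
    _ = _ := by simp; ring

lemma aux_sum (k : ℕ) (b : Fin k → ℤ) (N : ℕ) (P : Finset ℕ) (hP : ∀ p ∈ P, p.Prime)
    (c : ℕ → ℝ) (hc : ∀ p, 0 ≤ c p) :
    ∑ m ∈ Finset.Icc (-(N:ℤ)) N,
      ∏ p ∈ P, (1 + if (p:ℤ) ∣ ∏ i, (m - b i) then c p else 0) ≤
    (2 * N + 1) * ∏ p ∈ P, (1 + k * c p / p) + ∏ p ∈ P, (1 + k * c p) := by
  simp_rw [Finset.prod_one_add]
  rw [Finset.sum_comm, Finset.mul_sum, ← Finset.sum_add_distrib]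
  apply Finset.sum_le_sum
  intro T hT
  rw [Finset.mem_powerset] at hT
  have hT' : ∀ p ∈ T, p.Prime := fun p hp => hP p (hT hp)
  have e : ∀ m ∈ Finset.Icc (-(N:ℤ)) N,
      (∏ p ∈ T, if (p:ℤ) ∣ ∏ i, (m - b i) then c p else 0) =
      if (∀ p ∈ T, (p:ℤ) ∣ ∏ i, (m - b i)) then ∏ p ∈ T, c p else 0 := by
    intro m _
    rw [Finset.prod_ite_zero]
  rw [Finset.sum_congr rfl e, ← Finset.sum_filter, Finset.sum_const, nsmul_eq_mul]
  have h0 : 0 ≤ ∏ p ∈ T, c p := Finset.prod_nonneg (fun p _ => hc p)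
  refine (mul_le_mul_of_nonneg_right (aux_count k b N T hT') h0).trans (le_of_eq ?_)
  rw [Finset.prod_div_distrib, Finset.prod_mul_distrib, Finset.prod_const]
  ring

lemma aux_total (a k F : ℕ) (ha : 0 < a) (hF : 0 < F) :
    ((a ^ (k+1) * F : ℕ) : ℝ) / (Nat.totient (a ^ (k+1) * F) : ℝ) ≤
      ((a:ℝ) / (Nat.totient a : ℝ)) * auxR F.primeFactors := by
  rw [aux_ratio _ (by positivity), aux_ratio a ha, Nat.primeFactors_mul (by positivity) hF.ne',
    Nat.primeFactors_pow a (by omega)]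
  exact auxR_union (fun p hp => (Nat.prime_of_mem_primeFactors hp).two_le)
    (fun p hp => (Nat.prime_of_mem_primeFactors hp).two_le)

lemma aux_split (F y z : ℕ) :
    auxR F.primeFactors ≤ auxR y.primesLE * auxR ((z.primesLE.filter (fun p => y < p)).filter (fun p => p ∣ F))
      * auxR (F.primeFactors.filter (fun p => z < p)) := by
  have h1 : ∀ p ∈ y.primesLE, 2 ≤ p := fun p hp => (Nat.mem_primesLE.1 hp).2.two_le
  have h2 : ∀ p ∈ ((z.primesLE.filter (fun p => y < p)).filter (fun p => p ∣ F)), 2 ≤ p := by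
    intro p hp
    simp only [Finset.mem_filter, Nat.mem_primesLE] at hp
    exact hp.1.1.2.two_le
  have h3 : ∀ p ∈ F.primeFactors.filter (fun p => z < p), 2 ≤ p := by
    intro p hp
    simp only [Finset.mem_filter, Nat.mem_primeFactors] at hp
    exact hp.1.1.two_le
  have h12 : ∀ p ∈ y.primesLE ∪ ((z.primesLE.filter (fun p => y < p)).filter (fun p => p ∣ F)), 2 ≤ p := by
    intro p hp
    rcases Finset.mem_union.1 hp with h | h
    · exact h1 p h
    · exact h2 p h
  refine le_trans (auxR_mono (T := (y.primesLE ∪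
    ((z.primesLE.filter (fun p => y < p)).filter (fun p => p ∣ F))) ∪
      (F.primeFactors.filter (fun p => z < p))) ?_ ?_) ?_
  · intro p hp
    simp only [Finset.mem_union, Finset.mem_filter, Nat.mem_primesLE]
    have hp' := Nat.mem_primeFactors.1 hp
    rcases le_or_gt p y with h | h
    · exact Or.inl (Or.inl ⟨h, hp'.1⟩)
    · rcases le_or_gt p z with h' | h'
      · exact Or.inl (Or.inr ⟨⟨⟨h', hp'.1⟩, h⟩, hp'.2.1⟩)
      · exact Or.inr ⟨hp, h'⟩
  · intro p hp
    rcases Finset.mem_union.1 hp with h | h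
    · exact h12 p h
    · exact h3 p h
  · exact (auxR_union h12 h3).trans
      (mul_le_mul_of_nonneg_right (auxR_union h1 h2) (auxR_nonneg h3))

lemma aux_factor (s k p : ℕ) (hs : s ≤ k) (hp : k < p) (hk : 2 ≤ k) :
    ((1 - (p:ℝ)⁻¹)⁻¹) ^ s ≤ 1 + 4 * s / p := by
  have hb := aux_fac_bounds (p := p) (by omega)
  have hp' : (k:ℝ) + 1 ≤ p := by exact_mod_cast hp
  have hs' : (s:ℝ) ≤ k := by exact_mod_cast hs
  have hk' : (2:ℝ) ≤ k := by exact_mod_cast hk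
  have hp1 : (0:ℝ) < p - 1 := by linarith
  set t : ℝ := s * ((p:ℝ) - 1)⁻¹ with ht
  have ht0 : 0 ≤ t := by positivity
  have ht1 : t ≤ 1 := by
    rw [ht, ← div_eq_mul_inv, div_le_one hp1]; linarith
  have h1 : ((1 - (p:ℝ)⁻¹)⁻¹) ^ s ≤ Real.exp t := by
    rw [ht, Real.exp_nat_mul]
    exact pow_le_pow_left₀ (by linarith [hb.1]) hb.2 s
  have h2 : Real.exp t ≤ 1 + 2 * t := by
    have := Real.abs_exp_sub_one_le (x := t) (by rw [abs_of_nonneg ht0]; exact ht1)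
    rw [abs_of_nonneg ht0] at this
    linarith [le_abs_self (Real.exp t - 1)]
  have h3 : t ≤ 2 * s / p := by
    rw [ht, ← div_eq_mul_inv, div_le_div_iff₀ hp1 (by linarith)]
    have : (0:ℝ) ≤ s := by positivity
    nlinarith
  have : 4 * (s:ℝ) / p = 2 * (2 * s / p) := by ring
  linarith

lemma aux_case1 (k : ℕ) (b : Fin k → ℤ) (m : ℤ) (L : ℝ) (hL : 1 ≤ L) (hm : |(m:ℝ)| ≤ L)
    (hb : ∀ i, |(b i : ℝ)| ≤ L) (hne : ∀ i, m ≠ b i) (hk : 2 ≤ k)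
    (hu : Real.log L ≤ (k:ℝ)^8) :
    auxR (∏ i, (m - b i)).natAbs.primeFactors ≤
      3 * Real.exp 5 * Real.exp 3 * Real.log k * 9 := by
  set F := (∏ i, (m - b i)).natAbs with hF
  have h := aux_split F (k^9) (k^9)
  have hk' : (2:ℝ) ≤ k := by exact_mod_cast hk
  have hl2 := Real.log_two_gt_d9
  have hcard := aux_card_f k b m L hL hm hb hne
  have e : ((k^9).primesLE.filter (fun p => k^9 < p)).filter (fun p => p ∣ F) = ∅ := by
    ext p
    simp only [Finset.mem_filter, Nat.mem_primesLE, Finset.notMem_empty, iff_false]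
    rintro ⟨⟨⟨h1, -⟩, h2⟩, -⟩
    omega
  have h3 : auxR (F.primeFactors.filter (fun p => k^9 < p)) ≤ Real.exp 3 := by
    apply auxR_tail (y := k^9) (Nat.one_le_pow _ _ (by omega))
    · intro p hp; exact (Finset.mem_filter.1 hp).2
    · have h4 : ((F.primeFactors.filter (fun p => k^9 < p)).card : ℝ) ≤ F.primeFactors.card := by
        exact_mod_cast Finset.card_le_card (Finset.filter_subset _ _)
      refine h4.trans ?_
      have h5 : (F.primeFactors.card : ℝ) * Real.log 2 ≤ (3 * (k:ℝ)^9) * Real.log 2 := by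
        refine hcard.trans ?_
        have h8 : (1:ℝ) ≤ (k:ℝ)^8 := one_le_pow₀ (by linarith)
        have : Real.log 2 + Real.log L ≤ 3 * (k:ℝ)^8 * Real.log 2 := by nlinarith
        calc (k:ℝ) * (Real.log 2 + Real.log L) ≤ k * (3 * (k:ℝ)^8 * Real.log 2) := by gcongr
          _ = _ := by ring
      push_cast
      exact le_of_mul_le_mul_right h5 (by linarith)
  have h1 := aux_mertens (k^9) (hk.trans (Nat.le_self_pow (by norm_num) k))
  rw [e] at h
  have e1 : auxR ∅ = 1 := by simp [auxR]
  rw [e1, mul_one] at h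
  push_cast at h1
  rw [Real.log_pow] at h1
  have hlk : 0 < Real.log k := Real.log_pos (by linarith)
  refine h.trans ?_
  calc _ ≤ (3 * Real.exp 5 * ((9:ℕ) * Real.log k)) * Real.exp 3 := by
        apply mul_le_mul h1 h3 (auxR_nonneg _) (by positivity)
        intro p hp
        exact (Nat.prime_of_mem_primeFactors (Finset.mem_filter.1 hp).1).two_le
    _ = _ := by push_cast; ring

lemma aux_case2 (k s z : ℕ) (b : Fin k → ℤ) (m : ℤ) (L : ℝ) (hL : 1 ≤ L) (hm : |(m:ℝ)| ≤ L)
    (hb : ∀ i, |(b i : ℝ)| ≤ L) (hne : ∀ i, m ≠ b i) (hk : 2 ≤ k) (hs : s ≤ k)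
    (hu : (k:ℝ)^8 ≤ Real.log L) (hz : (Real.log L)^2 ≤ z) :
    auxR (∏ i, (m - b i)).natAbs.primeFactors ^ s ≤
      (3 * Real.exp 5 * Real.exp 3 * Real.log k) ^ s *
      ∏ p ∈ z.primesLE.filter (fun p => k < p),
        (1 + if (p:ℤ) ∣ ∏ i, (m - b i) then 4 * (s:ℝ) / p else 0) := by
  set F := (∏ i, (m - b i)).natAbs with hF
  have h := aux_split F k z
  have hk' : (2:ℝ) ≤ k := by exact_mod_cast hk
  have hl2 := Real.log_two_gt_d9
  have hcard := aux_card_f k b m L hL hm hb hne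
  set u := Real.log L with hudef
  have hku : (k:ℝ) ≤ u := le_trans (le_self_pow₀ (by linarith) (by norm_num)) hu
  have hz1 : 1 ≤ z := by
    have : (1:ℝ) ≤ z := by nlinarith
    exact_mod_cast this
  have h3 : auxR (F.primeFactors.filter (fun p => z < p)) ≤ Real.exp 3 := by
    apply auxR_tail (y := z) hz1
    · intro p hp; exact (Finset.mem_filter.1 hp).2
    · have h4 : ((F.primeFactors.filter (fun p => z < p)).card : ℝ) ≤ F.primeFactors.card := by
        exact_mod_cast Finset.card_le_card (Finset.filter_subset _ _)
      refine h4.trans ?_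
      have h5 : (F.primeFactors.card : ℝ) * Real.log 2 ≤ (3 * (z:ℝ)) * Real.log 2 := by
        refine hcard.trans ?_
        have : Real.log 2 + u ≤ 3 * u * Real.log 2 := by nlinarith
        calc (k:ℝ) * (Real.log 2 + u) ≤ u * (3 * u * Real.log 2) := by
              apply mul_le_mul hku this <;> nlinarith
          _ = 3 * u^2 * Real.log 2 := by ring
          _ ≤ _ := by gcongr
      exact le_of_mul_le_mul_right h5 (by linarith)
  have h1 := aux_mertens k hk
  have hlk : 0 < Real.log k := Real.log_pos (by linarith)
  have hn2 : 0 ≤ auxR ((z.primesLE.filter (fun p => k < p)).filter (fun p => p ∣ F)) := by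
    apply auxR_nonneg
    intro p hp
    simp only [Finset.mem_filter, Nat.mem_primesLE] at hp
    exact hp.1.1.2.two_le
  have hn3 : ∀ G : ℕ, ∀ p ∈ G.primeFactors, 2 ≤ p := fun G p hp =>
    (Nat.prime_of_mem_primeFactors hp).two_le
  have h6 : auxR F.primeFactors ≤ (3 * Real.exp 5 * Real.exp 3 * Real.log k) *
      auxR ((z.primesLE.filter (fun p => k < p)).filter (fun p => p ∣ F)) := by
    refine h.trans ?_
    calc _ ≤ (3 * Real.exp 5 * Real.log k) *
        auxR ((z.primesLE.filter (fun p => k < p)).filter (fun p => p ∣ F)) * Real.exp 3 := by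
          apply mul_le_mul _ h3 (auxR_nonneg _) (by positivity)
          · gcongr
          · intro p hp
            exact hn3 F p (Finset.mem_filter.1 hp).1
      _ = _ := by ring
  refine (pow_le_pow_left₀ (auxR_nonneg (hn3 F)) h6 s).trans ?_
  rw [mul_pow]
  apply mul_le_mul_of_nonneg_left _ (by positivity)
  unfold auxR
  rw [Finset.prod_filter, ← Finset.prod_pow]
  apply Finset.prod_le_prod
  · intro p hp
    simp only [Finset.mem_filter, Nat.mem_primesLE] at hp
    have := (aux_fac_bounds hp.1.2.two_le).1
    split_ifs <;> positivity
  · intro p hp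
    simp only [Finset.mem_filter, Nat.mem_primesLE] at hp
    have hiff : (p:ℤ) ∣ ∏ i, (m - b i) ↔ p ∣ F := by rw [hF, Int.natCast_dvd]
    by_cases hd : p ∣ F
    · rw [if_pos hd, if_pos (hiff.2 hd)]
      exact aux_factor s k p hs hp.2 hk
    · rw [if_neg hd, if_neg (fun h => hd (hiff.1 h))]
      simp

lemma aux_poly (w : ℝ) (hw : 1 ≤ w) : 4 * w * (5 + 4 * w^2) ≤ w^4 / 10 + 2000000000 := by
  have h1 : 4 * w * (5 + 4 * w^2) ≤ 36 * w^3 := by nlinarith [mul_pos (by linarith : 0 < w) (by linarith : 0 < w)]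
  rcases le_or_gt 360 w with h | h
  · have : 0 ≤ w^3 := by positivity
    have : 360 * w^3 ≤ w^4 := by
      rw [pow_succ w 3]; nlinarith
    linarith
  · have h3 : w^3 ≤ 360^3 := by gcongr
    have : 0 ≤ w^4 := by positivity
    nlinarith

lemma aux_prods (k s z : ℕ) (u : ℝ) (hk : 2 ≤ k) (hs : s ≤ k)
    (hu : (k:ℝ)^8 ≤ u) (hz : (z:ℝ) ≤ u^2 + 1) (hz1 : 1 ≤ z) :
    (∏ p ∈ z.primesLE.filter (fun p => k < p), (1 + k * (4 * (s:ℝ) / p) / p) ≤ Real.exp 8 ^ s) ∧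
    (∏ p ∈ z.primesLE.filter (fun p => k < p), (1 + k * (4 * (s:ℝ) / p)) ≤
      Real.exp (u / 10 + 2000000000)) := by
  have hk' : (2:ℝ) ≤ k := by exact_mod_cast hk
  have hs' : (s:ℝ) ≤ k := by exact_mod_cast hs
  constructor
  · calc _ ≤ ∏ p ∈ z.primesLE.filter (fun p => k < p), Real.exp (4 * k * s * ((p:ℝ)^2)⁻¹) := by
          apply Finset.prod_le_prod
          · intros; positivity
          · intro p hp
            have := Real.add_one_le_exp (4 * k * s * ((p:ℝ)^2)⁻¹)
            have e : (k:ℝ) * (4 * (s:ℝ) / p) / p = 4 * k * s * ((p:ℝ)^2)⁻¹ := by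
              rw [pow_two, mul_inv]; ring
            rw [e]; linarith
      _ = Real.exp (4 * k * s * ∑ p ∈ z.primesLE.filter (fun p => k < p), ((p:ℝ)^2)⁻¹) := by
          rw [Finset.mul_sum, Real.exp_sum]
      _ ≤ Real.exp (s * 8) := by
          apply Real.exp_le_exp.2
          have h1 : ∑ p ∈ z.primesLE.filter (fun p => k < p), ((p:ℝ)^2)⁻¹ ≤ 2 / (k + 1) := by
            refine le_trans ?_ (sum_Ioo_inv_sq_le (α := ℝ) k (z+1))
            apply Finset.sum_le_sum_of_subset_of_nonneg
            · intro p hp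
              simp only [Finset.mem_filter, Nat.mem_primesLE] at hp
              rw [Finset.mem_Ioo]; omega
            · intros; positivity
          have h2 : (2:ℝ) / (k+1) ≤ 2 / k := by gcongr; linarith
          calc 4 * (k:ℝ) * s * ∑ p ∈ z.primesLE.filter (fun p => k < p), ((p:ℝ)^2)⁻¹
              ≤ 4 * k * s * (2 / k) := by gcongr; exact h1.trans h2
            _ = s * 8 := by field_simp; ring
      _ = _ := by rw [Real.exp_nat_mul]
  · calc _ ≤ ∏ p ∈ z.primesLE.filter (fun p => k < p), Real.exp (4 * k * s * (p:ℝ)⁻¹) := by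
          apply Finset.prod_le_prod
          · intros; positivity
          · intro p hp
            have := Real.add_one_le_exp (4 * k * s * (p:ℝ)⁻¹)
            have e : (k:ℝ) * (4 * (s:ℝ) / p) = 4 * k * s * (p:ℝ)⁻¹ := by ring
            rw [e]; linarith
      _ = Real.exp (4 * k * s * ∑ p ∈ z.primesLE.filter (fun p => k < p), (p:ℝ)⁻¹) := by
          rw [Finset.mul_sum, Real.exp_sum]
      _ ≤ _ := by
          apply Real.exp_le_exp.2
          have h1 : ∑ p ∈ z.primesLE.filter (fun p => k < p), (p:ℝ)⁻¹ ≤ 1 + Real.log z := by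
            have := harmonic_le_one_add_log z
            rw [harmonic_eq_sum_Icc] at this
            push_cast at this
            refine le_trans ?_ this
            apply Finset.sum_le_sum_of_subset_of_nonneg
            · intro p hp
              simp only [Finset.mem_filter, Nat.mem_primesLE] at hp
              rw [Finset.mem_Icc]; omega
            · intros; positivity
          have hu0 : 0 ≤ u := le_trans (by positivity) hu
          have hu1 : 1 ≤ u := le_trans (one_le_pow₀ (by linarith)) hu
          set w := Real.sqrt (Real.sqrt u) with hw
          have hw2 : w^2 = Real.sqrt u := Real.sq_sqrt (Real.sqrt_nonneg u)
          have hw4 : w^4 = u := by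
            rw [show w^4 = (w^2)^2 by ring, hw2, Real.sq_sqrt hu0]
          have hw0 : 0 ≤ w := Real.sqrt_nonneg _
          have hw1 : 1 ≤ w := by
            rw [hw, Real.one_le_sqrt, Real.one_le_sqrt]; exact hu1
          have hkw : (k:ℝ)^2 ≤ w := by
            apply le_of_pow_le_pow_left₀ (n := 4) (by norm_num) hw0
            rw [hw4, ← pow_mul]; exact hu
          have hlog : Real.log z ≤ 4 * (1 + w^2) := by
            have hz0 : (0:ℝ) < z := by exact_mod_cast hz1
            calc Real.log z ≤ Real.log (((1 + w^2)^2)^2) := by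
                  apply Real.log_le_log hz0
                  have : u^2 = w^8 := by rw [← hw4]; ring
                  rw [this] at hz
                  refine hz.trans ?_
                  have e : ((1 + w^2)^2)^2 = w^8 + 1 + (4 * w^2 + 6 * w^4 + 4 * w^6) := by ring
                  rw [e]
                  have : 0 ≤ 4 * w^2 + 6 * w^4 + 4 * w^6 := by positivity
                  linarith
              _ = 4 * Real.log (1 + w^2) := by
                  rw [Real.log_pow, Real.log_pow]; push_cast; ring
              _ ≤ _ := by
                  have := Real.log_le_sub_one_of_pos (show 0 < 1 + w^2 by positivity)
                  linarith
          have hks : (k:ℝ) * s ≤ w := by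
            refine le_trans ?_ hkw
            rw [pow_two]; gcongr
          have hsum0 : 0 ≤ ∑ p ∈ z.primesLE.filter (fun p => k < p), (p:ℝ)⁻¹ :=
            Finset.sum_nonneg (by intros; positivity)
          calc 4 * (k:ℝ) * s * ∑ p ∈ z.primesLE.filter (fun p => k < p), (p:ℝ)⁻¹
              = 4 * (k * s) * ∑ p ∈ z.primesLE.filter (fun p => k < p), (p:ℝ)⁻¹ := by ring
            _ ≤ 4 * w * (5 + 4 * w^2) := by
                gcongr
                linarith
            _ ≤ w^4/10 + 2000000000 := aux_poly w hw1
            _ = _ := by rw [hw4]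

/-- Theorem (Radomskii, Theorem 4, part 1): for distinct integers `b₁, …, b_k`, `a ∈ ℕ`,
`k ≥ 2`, `x ≥ 3`, `(log x)^{-9/10} ≤ η ≤ 1`, `|b_i| ≤ log x`, and `f(b) = (b-b₁)⋯(b-b_k)`:
if `k ≥ log log x` or `s ≤ k`, then
`∑_{|b| ≤ η log x, b ≠ b_i} (a^{k+1}|f(b)|/φ(a^{k+1}|f(b)|))^s ≤ (c (a/φ(a)) log k)^s η log x`. -/
theorem sum_totient_ratio_linear_pow_le_log_k :
    ∃ c : ℝ, 0 < c ∧
      ∀ (k : ℕ) (b : Fin k → ℤ), Function.Injective b →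
      ∀ a : ℕ, 0 < a → ∀ s : ℕ, 0 < s → 2 ≤ k →
      ∀ x : ℝ, 3 ≤ x → ∀ η : ℝ, Real.log x ^ (-(9 : ℝ) / 10) ≤ η → η ≤ 1 →
      (∀ i : Fin k, |(b i : ℝ)| ≤ Real.log x) →
      (Real.log (Real.log x) ≤ k ∨ s ≤ k) →
      ∑ m ∈ (Finset.Icc (-⌊η * Real.log x⌋) ⌊η * Real.log x⌋).filter
          (fun m : ℤ => ∀ i : Fin k, m ≠ b i),
          (((a ^ (k + 1) * (∏ i : Fin k, (m - b i)).natAbs : ℕ) : ℝ) /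
            (Nat.totient (a ^ (k + 1) * (∏ i : Fin k, (m - b i)).natAbs) : ℝ)) ^ s ≤
        (c * ((a : ℝ) / (Nat.totient a : ℝ)) * Real.log k) ^ s * (η * Real.log x) := by
  refine ⟨3 * Real.exp 5 * Real.exp 3 * (27 + 3 * Real.exp 8 + Real.exp 2000000000),
    by positivity, ?_⟩
  intro k b _ a ha s hs hk x hx η hη1 hη2 hb hor
  set L := Real.log x with hLdef
  set H := η * L with hH
  set r := (a : ℝ) / (Nat.totient a : ℝ) with hr
  set K := 3 * Real.exp 5 * Real.exp 3 * Real.log k with hK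
  have hk' : (2:ℝ) ≤ k := by exact_mod_cast hk
  have hlk : 0 < Real.log k := Real.log_pos (by linarith)
  have hK0 : 0 < K := by positivity
  have hL1 : 1 ≤ L := by
    rw [hLdef, Real.le_log_iff_exp_le (by linarith)]
    linarith [Real.exp_one_lt_d9]
  have hL0 : 0 < L := by linarith
  have hHL : Real.exp (Real.log L / 10) ≤ H := by
    have : Real.exp (Real.log L / 10) = L ^ (-(9 : ℝ) / 10) * L := by
      rw [Real.rpow_def_of_pos hL0]
      nth_rewrite 3 [← Real.exp_log hL0]
      rw [← Real.exp_add]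
      congr 1; ring
    rw [this]
    exact mul_le_mul_of_nonneg_right hη1 hL0.le
  have hlL : 0 ≤ Real.log L := Real.log_nonneg hL1
  have hH1 : 1 ≤ H := le_trans (Real.one_le_exp (by positivity)) hHL
  have hHle : H ≤ L := by rw [hH]; nlinarith
  obtain ⟨N, hN⟩ := Int.eq_ofNat_of_zero_le (Int.floor_nonneg.2 (by linarith : 0 ≤ H))
  have hNH : (N:ℝ) ≤ H := by
    have := Int.floor_le H
    rw [hN] at this
    exact_mod_cast this
  have hr0 : 0 ≤ r := by positivity
  rw [hN]
  -- reduction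
  have red : ∀ (W : ℤ → ℝ), (∀ m, 0 ≤ W m) →
      (∀ m : ℤ, |(m:ℝ)| ≤ L → (∀ i, m ≠ b i) →
        auxR (∏ i, (m - b i)).natAbs.primeFactors ^ s ≤ K ^ s * W m) →
      (∑ m ∈ Finset.Icc (-(N:ℤ)) N, W m ≤
        (27 + 3 * Real.exp 8 + Real.exp 2000000000) ^ s * H) →
      ∑ m ∈ (Finset.Icc (-(N:ℤ)) N).filter (fun m : ℤ => ∀ i : Fin k, m ≠ b i),
          (((a ^ (k + 1) * (∏ i : Fin k, (m - b i)).natAbs : ℕ) : ℝ) /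
            (Nat.totient (a ^ (k + 1) * (∏ i : Fin k, (m - b i)).natAbs) : ℝ)) ^ s ≤
        (3 * Real.exp 5 * Real.exp 3 * (27 + 3 * Real.exp 8 + Real.exp 2000000000) * r *
          Real.log k) ^ s * H := by
    intro W hW0 hW hWs
    calc _ ≤ ∑ m ∈ (Finset.Icc (-(N:ℤ)) N).filter (fun m : ℤ => ∀ i : Fin k, m ≠ b i),
          (r * K) ^ s * W m := by
          apply Finset.sum_le_sum
          intro m hm
          rw [Finset.mem_filter, Finset.mem_Icc] at hm
          have hmL : |(m:ℝ)| ≤ L := by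
            rw [abs_le]
            have h1 : (-(N:ℝ)) ≤ m := by exact_mod_cast hm.1.1
            have h2 : (m:ℝ) ≤ N := by exact_mod_cast hm.1.2
            constructor <;> linarith
          have hF : 0 < (∏ i, (m - b i)).natAbs := by
            rw [Int.natAbs_pos, Finset.prod_ne_zero_iff]
            intro i _
            exact sub_ne_zero.2 (hm.2 i)
          calc _ ≤ (r * auxR (∏ i, (m - b i)).natAbs.primeFactors) ^ s := by
                apply pow_le_pow_left₀ (by positivity)
                exact aux_total a k _ ha hF
            _ = r ^ s * auxR (∏ i, (m - b i)).natAbs.primeFactors ^ s := mul_pow _ _ _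
            _ ≤ r ^ s * (K ^ s * W m) := by
                gcongr
                exact hW m hmL hm.2
            _ = _ := by ring
      _ ≤ ∑ m ∈ Finset.Icc (-(N:ℤ)) N, (r * K) ^ s * W m := by
          apply Finset.sum_le_sum_of_subset_of_nonneg (Finset.filter_subset _ _)
          intro m _ _
          have := hW0 m
          positivity
      _ = (r * K) ^ s * ∑ m ∈ Finset.Icc (-(N:ℤ)) N, W m := by rw [Finset.mul_sum]
      _ ≤ (r * K) ^ s * ((27 + 3 * Real.exp 8 + Real.exp 2000000000) ^ s * H) := by gcongr
      _ = _ := by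
          rw [← mul_assoc, ← mul_pow, hK]
          congr 2
          ring
  rcases le_or_gt (Real.log L) ((k:ℝ)^8) with hcase | hcase
  · apply red (fun _ => 9 ^ s) (fun _ => by positivity)
    · intro m hm hne
      rw [← mul_pow]
      apply pow_le_pow_left₀
      · exact auxR_nonneg (fun p hp => (Nat.prime_of_mem_primeFactors hp).two_le)
      · exact aux_case1 k b m L hL1 hm hb hne hk hcase
    · have hcard : ((Finset.Icc (-(N:ℤ)) N).card : ℝ) = 2 * N + 1 := by
        have : (Finset.Icc (-(N:ℤ)) N).card = 2 * N + 1 := by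
          rw [Int.card_Icc]; omega
        rw [this]; push_cast; ring
      rw [Finset.sum_const, nsmul_eq_mul, hcard]
      have h3 : (3:ℝ) ≤ 3 ^ s := le_self_pow₀ (by norm_num) (by omega)
      calc (2 * (N:ℝ) + 1) * 9 ^ s ≤ (3 * H) * 9 ^ s := by gcongr; linarith
        _ ≤ (3 ^ s * H) * 9 ^ s := by gcongr
        _ = 27 ^ s * H := by
            rw [show (27:ℝ) = 3 * 9 by norm_num, mul_pow]; ring
        _ ≤ _ := by
            gcongr
            have := Real.exp_pos 8
            have := Real.exp_pos 2000000000
            linarith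
  · have hsk : s ≤ k := by
      rcases hor with h | h
      · exfalso
        have : (k:ℝ) ≤ (k:ℝ)^8 := le_self_pow₀ (by linarith) (by norm_num)
        linarith
      · exact h
    set u := Real.log L with hu
    set z := ⌈u^2⌉₊ with hz
    have hz1 : u^2 ≤ z := Nat.le_ceil _
    have hz2 : (z:ℝ) ≤ u^2 + 1 := (Nat.ceil_lt_add_one (by positivity)).le
    have hu1 : 1 ≤ u := le_trans (one_le_pow₀ (by linarith)) hcase.le
    have hz3 : 1 ≤ z := by
      have : (1:ℝ) ≤ z := by nlinarith
      exact_mod_cast this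
    obtain ⟨hp1, hp2⟩ := aux_prods k s z u hk hsk hcase.le hz2 hz3
    apply red (fun m => ∏ p ∈ z.primesLE.filter (fun p => k < p),
        (1 + if (p:ℤ) ∣ ∏ i, (m - b i) then 4 * (s:ℝ) / p else 0))
    · intro m
      apply Finset.prod_nonneg
      intro p _
      split_ifs <;> positivity
    · intro m hm hne
      exact aux_case2 k s z b m L hL1 hm hb hne hk hsk hcase.le hz1
    · refine (aux_sum k b N _ ?_ (fun p => 4 * (s:ℝ) / p) (fun p => by positivity)).trans ?_
      · intro p hp
        simp only [Finset.mem_filter, Nat.mem_primesLE] at hp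
        exact hp.1.2
      have h3 : (3:ℝ) ≤ 3 ^ s := le_self_pow₀ (by norm_num) (by omega)
      have hE : Real.exp 2000000000 ≤ Real.exp 2000000000 ^ s :=
        le_self_pow₀ (Real.one_le_exp (by norm_num)) (by omega)
      have q2 : ∏ p ∈ z.primesLE.filter (fun p => k < p), (1 + k * (4 * (s:ℝ) / p)) ≤
          Real.exp 2000000000 ^ s * H := by
        refine hp2.trans ?_
        rw [Real.exp_add, mul_comm]
        gcongr
      have q1 : (2 * (N:ℝ) + 1) * ∏ p ∈ z.primesLE.filter (fun p => k < p),
          (1 + k * (4 * (s:ℝ) / p) / p) ≤ (3 * Real.exp 8) ^ s * H := by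
        calc _ ≤ (3 * H) * Real.exp 8 ^ s := by
              apply mul_le_mul _ hp1 _ (by positivity)
              · linarith
              · apply Finset.prod_nonneg; intros; positivity
          _ ≤ (3 ^ s * H) * Real.exp 8 ^ s := by gcongr
          _ = _ := by rw [mul_pow]; ring
      have q3 : (3 * Real.exp 8) ^ s + Real.exp 2000000000 ^ s ≤
          (27 + 3 * Real.exp 8 + Real.exp 2000000000) ^ s := by
        refine (pow_add_pow_le (by positivity) (by positivity) (by omega)).trans ?_
        gcongr
        linarith
      calc _ ≤ ((3 * Real.exp 8) ^ s + Real.exp 2000000000 ^ s) * H := by linarith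
        _ ≤ _ := by gcongr
end

section
/- There exists an absolute constant c > 0 with the following property. Let b_1, ..., b_k be distinct integers, a ∈ ℕ, s ∈ ℕ, x ≥ 3 real, (log x)^{−9/10} ≤ η ≤ 1, and |b_i| ≤ log x for all 1 ≤ i ≤ k. Set f(b) = (b − b_1)···(b − b_k). If 2 ≤ k < log log x and s > k, then Σ_{|b| ≤ η log x, b ≠ b_1, ..., b_k} (a^{k+1}|f(b)| / φ(a^{k+1}|f(b)|))^s ≤ (c · (a/φ(a)) · log s)^s · η·log x, where b runs over integers. -/
open Finset

lemma aux_theta (n : ℕ) : ∑ p ∈ (Icc 1 n).filter Nat.Prime, Real.log p ≤ Real.log 4 * n := by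
  have h := Chebyshev.theta_le_log4_mul_x (x := (n:ℝ)) (by positivity)
  rw [Chebyshev.theta_eq_sum_Icc] at h
  refine le_trans ?_ h
  simp only [Nat.floor_natCast]
  apply sum_le_sum_of_subset_of_nonneg
  · intro p; simp; tauto
  · intros; positivity

lemma aux_fact (n p : ℕ) (hp : p.Prime) (hpn : p ≤ n) : n / p ≤ (n.factorial).factorization p := by
  rw [Nat.factorization_factorial hp (Nat.lt_succ_self _)]
  have : (1:ℕ) ∈ Ico 1 (Nat.log p n).succ := by
    simp
    exact ⟨hpn, hp.one_lt⟩
  have h2 := single_le_sum (f := fun i => n / p ^ i) (fun i _ => Nat.zero_le _) this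
  simpa using h2

lemma mertens1 (n : ℕ) (hn : 1 ≤ n) :
    ∑ p ∈ (Icc 1 n).filter Nat.Prime, Real.log p / p ≤ Real.log n + Real.log 4 := by
  have hn' : (0:ℝ) < n := by exact_mod_cast hn
  have h1 : Real.log (n.factorial) ≤ n * Real.log n := by
    have : (n.factorial : ℝ) ≤ (n:ℝ)^n := by exact_mod_cast Nat.factorial_le_pow n
    have := Real.log_le_log (by positivity) this
    rwa [Real.log_pow] at this
  have h2 : ∑ p ∈ (Icc 1 n).filter Nat.Prime, ((n / p : ℕ) : ℝ) * Real.log p ≤ Real.log n.factorial := by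
    have h3 : Real.log n.factorial = ∑ p ∈ n.factorial.primeFactors, (n.factorial.factorization p : ℝ) * Real.log p := by
      conv_lhs => rw [← Nat.prod_factorization_pow_eq_self (Nat.factorial_ne_zero n)]
      rw [Finsupp.prod, Nat.support_factorization]
      push_cast
      rw [Real.log_prod]
      · simp [Real.log_pow]
      · intro p hp
        have := (Nat.prime_of_mem_primeFactors hp).pos
        positivity
    rw [h3]
    calc _ ≤ ∑ p ∈ (Icc 1 n).filter Nat.Prime, (n.factorial.factorization p : ℝ) * Real.log p := by
          apply sum_le_sum
          intro p hp
          simp at hp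
          gcongr
          exact aux_fact n p hp.2 hp.1.2
      _ ≤ _ := by
          apply sum_le_sum_of_subset_of_nonneg
          · intro p hp
            simp at hp
            rw [Nat.mem_primeFactors]
            exact ⟨hp.2, (hp.2.dvd_factorial).2 hp.1.2, Nat.factorial_ne_zero n⟩
          · intros; positivity
  have h4 : ∑ p ∈ (Icc 1 n).filter Nat.Prime, ((n:ℝ) * (Real.log p / p) - Real.log p) ≤
      ∑ p ∈ (Icc 1 n).filter Nat.Prime, ((n / p : ℕ) : ℝ) * Real.log p := by
    apply sum_le_sum
    intro p hp
    simp at hp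
    have hp0 : (0:ℝ) < p := by exact_mod_cast hp.2.pos
    have : (n:ℝ)/p - 1 ≤ ((n / p : ℕ) : ℝ) := by
      have := Nat.lt_floor_add_one ((n:ℝ)/p)
      rw [Nat.floor_div_eq_div] at this
      linarith
    have hl : 0 ≤ Real.log p := by positivity
    calc _ = ((n:ℝ)/p - 1) * Real.log p := by field_simp
      _ ≤ _ := by gcongr
  rw [sum_sub_distrib, ← mul_sum] at h4
  have h5 := aux_theta n
  have : (n:ℝ) * ∑ p ∈ (Icc 1 n).filter Nat.Prime, Real.log p / p ≤ n * (Real.log n + Real.log 4) := by linarith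
  exact le_of_mul_le_mul_left this hn'

lemma mertens2_aux (n : ℕ) (hn : 2 ≤ n) :
    ∑ p ∈ (Icc 1 n).filter Nat.Prime, (1:ℝ) / p - (∑ p ∈ (Icc 1 n).filter Nat.Prime, Real.log p / p) / Real.log n
      ≤ Real.log (Real.log n) - Real.log (Real.log 2) + Real.log 4 * (1 / Real.log 2 - 1 / Real.log n) := by
  induction n, hn using Nat.le_induction with
  | base =>
    have : (Icc 1 2).filter Nat.Prime = {2} := by decide
    rw [this]
    have : Real.log 2 ≠ 0 := by positivity
    simp
    field_simp
    simp
  | succ n hn ih =>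
    have hA := mertens1 n (by omega)
    set A := ∑ p ∈ (Icc 1 n).filter Nat.Prime, Real.log p / p with hAdef
    have hl : 0 < Real.log n := Real.log_pos (by exact_mod_cast hn)
    have hl1 : Real.log n ≤ Real.log (n+1:ℕ) := Real.log_le_log (by positivity) (by push_cast; linarith)
    have hl1' : 0 < Real.log (n+1:ℕ) := by linarith
    have key : ∑ p ∈ (Icc 1 (n+1)).filter Nat.Prime, (1:ℝ) / p - (∑ p ∈ (Icc 1 (n+1)).filter Nat.Prime, Real.log p / p) / Real.log (n+1 : ℕ)
        = ∑ p ∈ (Icc 1 n).filter Nat.Prime, (1:ℝ) / p - A / Real.log (n+1:ℕ) := by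
      have : Icc 1 (n+1) = insert (n+1) (Icc 1 n) := by
        ext; simp; omega
      rw [this, filter_insert]
      split_ifs with h
      · rw [sum_insert (by simp), sum_insert (by simp), ← hAdef]
        have : ((n+1:ℕ):ℝ) ≠ 0 := by positivity
        field_simp
        ring
      · rfl
    rw [key]
    have h1 : A / Real.log n - A / Real.log (n+1:ℕ) ≤ (Real.log n + Real.log 4) * (1/Real.log n - 1/Real.log (n+1:ℕ)) := by
      have : A / Real.log n - A / Real.log (n+1:ℕ) = A * (1/Real.log n - 1/Real.log (n+1:ℕ)) := by ring
      rw [this]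
      apply mul_le_mul_of_nonneg_right hA
      rw [sub_nonneg]
      exact one_div_le_one_div_of_le hl hl1
    have h2 : Real.log n * (1/Real.log n - 1/Real.log (n+1:ℕ)) ≤ Real.log (Real.log (n+1:ℕ)) - Real.log (Real.log n) := by
      rw [← Real.log_div hl1'.ne' hl.ne']
      have := Real.one_sub_inv_le_log_of_pos (div_pos hl1' hl)
      refine le_trans (le_of_eq ?_) this
      field_simp
    linarith

/-- Mertens product upper bound -/
lemma mertens3 : ∃ C : ℝ, 1 ≤ C ∧ ∀ n : ℕ, 2 ≤ n →
    ∏ p ∈ (Icc 1 n).filter Nat.Prime, (1 + 1/((p:ℝ)-1)) ≤ C * Real.log n := by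
  set K : ℝ := 1 + Real.log 4 / Real.log 2 - Real.log (Real.log 2) + Real.log 4 * (1 / Real.log 2) + 1 + 1 with hK
  refine ⟨max 1 (Real.exp K), le_max_left _ _, fun n hn => ?_⟩
  have hl : 0 < Real.log n := Real.log_pos (by exact_mod_cast hn)
  have h2 : Real.log 2 ≤ Real.log n := Real.log_le_log (by norm_num) (by exact_mod_cast hn)
  have hA := mertens1 n (by omega)
  have hB := mertens2_aux n hn
  have hS : ∑ p ∈ (Icc 1 n).filter Nat.Prime, (1:ℝ) / p ≤ Real.log (Real.log n) + (K - 2) := by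
    have e1 : (∑ p ∈ (Icc 1 n).filter Nat.Prime, Real.log p / p) / Real.log n ≤ 1 + Real.log 4 / Real.log n := by
      rw [div_le_iff₀ hl]
      field_simp
      linarith
    have e2 : Real.log 4 / Real.log n ≤ Real.log 4 / Real.log 2 := by
      gcongr
    have e3 : 0 ≤ Real.log 4 * (1 / Real.log n) := by positivity
    have e4 := mul_sub (Real.log 4) (1/Real.log 2) (1/Real.log n)
    rw [e4] at hB
    linarith
  have hT : ∑ p ∈ (Icc 1 n).filter Nat.Prime, (1/((p:ℝ)-1) - 1/p) ≤ 1 := by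
    calc _ ≤ ∑ p ∈ Icc 2 n, (1/((p:ℝ)-1) - 1/p) := by
          apply sum_le_sum_of_subset_of_nonneg
          · intro p hp
            simp at hp ⊢
            exact ⟨hp.2.two_le, hp.1.2⟩
          · intro p hp _
            simp at hp
            have : (2:ℝ) ≤ p := by exact_mod_cast hp.1
            rw [sub_nonneg]
            exact one_div_le_one_div_of_le (by linarith) (by linarith)
      _ = 1 - 1/(n:ℝ) := by
          clear * - hn
          induction n, hn using Nat.le_induction with
          | base => norm_num
          | succ n hn ih =>
            rw [sum_Icc_succ_top (by omega), ih]
            push_cast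
            ring
      _ ≤ 1 := by
          have : 0 ≤ 1/(n:ℝ) := by positivity
          linarith
  rw [sum_sub_distrib] at hT
  calc _ ≤ ∏ p ∈ (Icc 1 n).filter Nat.Prime, Real.exp (1/((p:ℝ)-1)) := by
        apply prod_le_prod
        · intro p hp
          simp at hp
          have : (2:ℝ) ≤ p := by exact_mod_cast hp.2.two_le
          have : 0 < 1/((p:ℝ)-1) := by apply one_div_pos.2; linarith
          linarith
        · intro p hp
          rw [add_comm]
          exact Real.add_one_le_exp _
    _ = Real.exp (∑ p ∈ (Icc 1 n).filter Nat.Prime, 1/((p:ℝ)-1)) := (Real.exp_sum _ _).symm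
    _ ≤ Real.exp (K + Real.log (Real.log n)) := by
        apply Real.exp_le_exp.2
        linarith
    _ = Real.exp K * Real.log n := by rw [Real.exp_add, Real.exp_log hl]
    _ ≤ _ := by gcongr; exact le_max_right _ _

lemma prod_mono_one {S T : Finset ℕ} {f : ℕ → ℝ} (h : S ⊆ T) (h1 : ∀ p ∈ T, 1 ≤ f p) :
    ∏ p ∈ S, f p ≤ ∏ p ∈ T, f p := by
  rw [← prod_sdiff h]
  have a : 1 ≤ ∏ p ∈ T \ S, f p := by
    calc (1:ℝ) = ∏ p ∈ T \ S, (1:ℝ) := by simp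
      _ ≤ _ := prod_le_prod (fun _ _ => zero_le_one) (fun p hp => h1 p (mem_sdiff.1 hp).1)
  have b : 0 ≤ ∏ p ∈ S, f p := prod_nonneg (fun p hp => by linarith [h1 p (h hp)])
  nlinarith

lemma ratio_eq (n : ℕ) (hn : n ≠ 0) :
    (n : ℝ) / (Nat.totient n : ℝ) = ∏ p ∈ n.primeFactors, (1 + 1/((p:ℝ)-1)) := by
  have h := Nat.totient_eq_mul_prod_factors n
  have h' : (Nat.totient n : ℝ) = n * ∏ p ∈ n.primeFactors, (1 - (p:ℝ)⁻¹) := by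
    have h2 := congrArg (fun q : ℚ => (q:ℝ)) h
    push_cast at h2
    exact h2
  rw [h']
  have hn' : (n:ℝ) ≠ 0 := by exact_mod_cast hn
  have : ∏ p ∈ n.primeFactors, (1 + 1/((p:ℝ)-1)) = (∏ p ∈ n.primeFactors, (1 - (p:ℝ)⁻¹))⁻¹ := by
    rw [← prod_inv_distrib]
    apply prod_congr rfl
    intro p hp
    have : (2:ℝ) ≤ p := by exact_mod_cast (Nat.prime_of_mem_primeFactors hp).two_le
    have h1 : (p:ℝ) - 1 ≠ 0 := by linarith
    have h2 : (p:ℝ) ≠ 0 := by linarith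
    field_simp
    ring
  rw [this, div_mul_eq_div_div, div_self hn', one_div]

lemma ratio_mul (a q k : ℕ) (ha : 0 < a) (hq : 0 < q) :
    ((a ^ (k+1) * q : ℕ) : ℝ) / (Nat.totient (a ^ (k + 1) * q) : ℝ) ≤
      ((a:ℝ) / Nat.totient a) * ((q:ℝ) / Nat.totient q) := by
  have h1 := Nat.totient_super_multiplicative (a ^ (k+1)) q
  have h2 : Nat.totient (a^(k+1)) = a^k * Nat.totient a := by
    clear h1
    induction k with
    | zero => simp
    | succ k ih =>
      have h := Nat.totient_gcd_mul_totient_mul a (a^(k+1))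
      rw [Nat.gcd_eq_left (dvd_pow_self a (by omega)), mul_assoc] at h
      have h' := Nat.eq_of_mul_eq_mul_left (Nat.totient_pos.2 ha) h
      rw [pow_succ' a (k+1), h', ih]
      ring
  have ha' : (0:ℝ) < Nat.totient a := by exact_mod_cast Nat.totient_pos.2 ha
  have hq' : (0:ℝ) < Nat.totient q := by exact_mod_cast Nat.totient_pos.2 hq
  have ha0 : (0:ℝ) < a := by exact_mod_cast ha
  rw [h2] at h1
  have h3 : (a:ℝ)^k * Nat.totient a * Nat.totient q ≤ Nat.totient (a ^ (k + 1) * q) := by exact_mod_cast h1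
  calc _ ≤ ((a ^ (k+1) * q : ℕ) : ℝ) / ((a:ℝ)^k * Nat.totient a * Nat.totient q) := by gcongr
    _ = _ := by
      push_cast
      field_simp
      ring

lemma G_le (p : ℕ) (hp : 2 ≤ p) : (1 + 1/((p:ℝ)-1)) ≤ Real.exp (2/p) := by
  have : (2:ℝ) ≤ p := by exact_mod_cast hp
  have h : 1/((p:ℝ)-1) ≤ 2/p := by
    rw [div_le_div_iff₀ (by linarith) (by linarith)]
    linarith
  linarith [Real.add_one_le_exp (2/(p:ℝ))]

lemma G_ge (p : ℕ) (hp : 2 ≤ p) : 1 ≤ (1 + 1/((p:ℝ)-1)) := by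
  have : (2:ℝ) ≤ p := by exact_mod_cast hp
  have : 0 < 1/((p:ℝ)-1) := by apply one_div_pos.2; linarith
  linarith

lemma tail_bound (F : Finset ℕ) (Z : ℕ) (hF : ∀ p ∈ F, p.Prime ∧ Z < p) (hc : (F.card : ℝ) ≤ 4 * (Z+1)) :
    ∏ p ∈ F, (1 + 1/((p:ℝ)-1)) ≤ Real.exp 8 := by
  calc _ ≤ ∏ p ∈ F, Real.exp (2/((Z:ℝ)+1)) := by
        apply prod_le_prod
        · intro p hp
          linarith [G_ge p (hF p hp).1.two_le]
        · intro p hp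
          refine (G_le p (hF p hp).1.two_le).trans ?_
          apply Real.exp_le_exp.2
          have : (Z:ℝ)+1 ≤ p := by exact_mod_cast (hF p hp).2
          gcongr
    _ = Real.exp (F.card * (2/((Z:ℝ)+1))) := by
        rw [prod_const, ← Real.exp_nat_mul]
    _ ≤ _ := by
        apply Real.exp_le_exp.2
        have : (0:ℝ) < Z+1 := by positivity
        rw [mul_div_assoc', div_le_iff₀ this]
        linarith

lemma omega_bound (n : ℕ) (hn : n ≠ 0) (k : ℕ) (L : ℝ) (hL : 0 < L) (hl : 1 ≤ Real.log L)
    (h : (n:ℝ) ≤ (2*L)^k) : (n.primeFactors.card : ℝ) ≤ 4 * (k * Real.log L) := by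
  have h1 : 2 ^ n.primeFactors.card ≤ n := by
    calc _ ≤ ∏ p ∈ n.primeFactors, p :=
          Finset.pow_card_le_prod _ _ _ (fun p hp => (Nat.prime_of_mem_primeFactors hp).two_le)
      _ ≤ n := Nat.le_of_dvd (Nat.pos_of_ne_zero hn) (Nat.prod_primeFactors_dvd n)
  have h2 : (2:ℝ) ^ n.primeFactors.card ≤ (2*L)^k := le_trans (by exact_mod_cast h1) h
  have h3 := Real.log_le_log (by positivity) h2
  rw [Real.log_pow, Real.log_pow, Real.log_mul (by norm_num) hL.ne'] at h3
  have l2 := Real.log_two_gt_d9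
  have l2' := Real.log_two_lt_d9
  have hk : (0:ℝ) ≤ k := by positivity
  have hc : (0:ℝ) ≤ n.primeFactors.card := by positivity
  have : (n.primeFactors.card:ℝ) * (1/2) ≤ k * (2 * Real.log L) := by
    calc _ ≤ (n.primeFactors.card:ℝ) * Real.log 2 := by gcongr; linarith
      _ ≤ _ := h3
      _ ≤ _ := by gcongr; linarith
  linarith

lemma count_base (X : Finset ℤ) (M : ℤ) (hX : X ⊆ Icc (-M) M) (q : ℤ) (hq : 0 < q)
    (hc : ∀ x ∈ X, ∀ y ∈ X, q ∣ x - y) (hM : 0 ≤ M) : (X.card : ℝ) ≤ 2*M/q + 1 := by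
  have hq' : (0:ℝ) < q := by exact_mod_cast hq
  have hM' : (0:ℝ) ≤ M := by exact_mod_cast hM
  rcases X.eq_empty_or_nonempty with rfl | hne
  · simp; positivity
  set x0 := X.min' hne
  have h0 : x0 ∈ X := X.min'_mem hne
  have hcard : X.card ≤ (Icc (0:ℤ) (2*M/q)).card := by
    apply card_le_card_of_injOn (fun x => (x - x0)/q)
    · intro x hx
      have hx : x ∈ X := hx
      have e1 : x0 ≤ x := X.min'_le x hx
      have e2 := mem_Icc.1 (hX hx)
      have e3 := mem_Icc.1 (hX h0)
      simp only [coe_Icc, Set.mem_Icc]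
      exact ⟨Int.ediv_nonneg (by omega) hq.le, Int.ediv_le_ediv hq (by omega)⟩
    · intro x hx y hy hxy
      have e1 := Int.ediv_mul_cancel (hc x hx x0 h0)
      have e2 := Int.ediv_mul_cancel (hc y hy x0 h0)
      simp only at hxy
      rw [hxy] at e1
      omega
  rw [Int.card_Icc] at hcard
  have h1 : 0 ≤ 2*M/q := Int.ediv_nonneg (by omega) hq.le
  have h2 : (X.card : ℤ) ≤ 2*M/q + 1 := by omega
  have h3 : (X.card : ℝ) ≤ ((2*M/q : ℤ):ℝ) + 1 := by exact_mod_cast h2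
  have h4 : ((2*M/q : ℤ):ℝ) ≤ 2*M/q := by
    rw [le_div_iff₀ hq']
    exact_mod_cast Int.ediv_mul_le (2*M) hq.ne'
  linarith

lemma count_D (k : ℕ) (b : Fin k → ℤ) (M : ℤ) (hM : 0 ≤ M) (D : Finset ℕ) :
    (∀ p ∈ D, p.Prime) → ∀ (X : Finset ℤ) (q : ℕ), X ⊆ Icc (-M) M → 0 < q → (∀ p ∈ D, Nat.Coprime q p) →
    (∀ x ∈ X, ∀ y ∈ X, (q:ℤ) ∣ x - y) →
    ((X.filter (fun m => ∀ p ∈ D, (p:ℤ) ∣ ∏ i, (m - b i))).card : ℝ) ≤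
      (k:ℝ)^D.card * (2*M/(q * ∏ p ∈ D, (p:ℝ)) + 1) := by
  classical
  induction D using Finset.induction_on with
  | empty =>
    intro _ X q hX hq _ hc
    simpa using count_base X M hX q (by exact_mod_cast hq) hc hM
  | insert r D hr ih =>
    intro hp X q hX hq hco hc
    have hrp : r.Prime := hp r (mem_insert_self _ _)
    have hsub : X.filter (fun m => ∀ p ∈ insert r D, (p:ℤ) ∣ ∏ i, (m - b i)) ⊆
        univ.biUnion (fun i : Fin k => (X.filter (fun m => (r:ℤ) ∣ m - b i)).filter
          (fun m => ∀ p ∈ D, (p:ℤ) ∣ ∏ i, (m - b i))) := by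
      intro m hm
      rw [mem_filter] at hm
      have h1 := hm.2 r (mem_insert_self _ _)
      rw [Prime.dvd_finsetProd_iff (Nat.prime_iff_prime_int.1 hrp)] at h1
      obtain ⟨i, _, hi⟩ := h1
      rw [mem_biUnion]
      refine ⟨i, mem_univ _, ?_⟩
      rw [mem_filter, mem_filter]
      exact ⟨⟨hm.1, hi⟩, fun p hpD => hm.2 p (mem_insert_of_mem hpD)⟩
    have h2 := (card_le_card hsub).trans card_biUnion_le
    have h3 : ∀ i : Fin k, (((X.filter (fun m => (r:ℤ) ∣ m - b i)).filter
          (fun m => ∀ p ∈ D, (p:ℤ) ∣ ∏ i, (m - b i))).card : ℝ) ≤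
          (k:ℝ)^D.card * (2*M/((q*r : ℕ) * ∏ p ∈ D, (p:ℝ)) + 1) := by
      intro i
      apply ih (fun p hpD => hp p (mem_insert_of_mem hpD))
      · exact (filter_subset _ _).trans hX
      · exact Nat.mul_pos hq hrp.pos
      · intro p hpD
        apply Nat.Coprime.mul_left
        · exact hco p (mem_insert_of_mem hpD)
        · rw [Nat.coprime_primes hrp (hp p (mem_insert_of_mem hpD))]
          rintro rfl
          exact hr hpD
      · intro x hx y hy
        rw [mem_filter] at hx hy
        push_cast
        apply IsCoprime.mul_dvd
        · exact Nat.isCoprime_iff_coprime.2 (hco r (mem_insert_self _ _))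
        · exact hc x hx.1 y hy.1
        · have := dvd_sub hx.2 hy.2
          simpa using this
    calc _ ≤ ((∑ i : Fin k, ((X.filter (fun m => (r:ℤ) ∣ m - b i)).filter
          (fun m => ∀ p ∈ D, (p:ℤ) ∣ ∏ i, (m - b i))).card : ℕ):ℝ) := by exact_mod_cast h2
      _ ≤ ∑ i : Fin k, (k:ℝ)^D.card * (2*M/((q*r : ℕ) * ∏ p ∈ D, (p:ℝ)) + 1) := by
          push_cast
          push_cast at h3
          exact sum_le_sum (fun i _ => h3 i)
      _ = _ := by
          rw [sum_const, card_univ, Fintype.card_fin, card_insert_of_notMem hr, prod_insert hr]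
          simp only [nsmul_eq_mul]
          push_cast
          ring

lemma sum_prod_bound (k : ℕ) (b : Fin k → ℤ) (M : ℤ) (hM : 0 ≤ M) (X : Finset ℤ) (hX : X ⊆ Icc (-M) M)
    (T : Finset ℕ) (hT : ∀ p ∈ T, p.Prime) (g : ℕ → ℝ) (hg : ∀ p, 0 ≤ g p) :
    ∑ m ∈ X, ∏ p ∈ T.filter (fun p : ℕ => (p:ℤ) ∣ ∏ i, (m - b i)), (1 + g p) ≤
      2 * M * ∏ p ∈ T, (1 + k * g p / p) + ∏ p ∈ T, (1 + k * g p) := by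
  classical
  have h1 : ∀ m ∈ X, ∏ p ∈ T.filter (fun p : ℕ => (p:ℤ) ∣ ∏ i, (m - b i)), (1 + g p) =
      ∑ D ∈ T.powerset, if (∀ p ∈ D, (p:ℤ) ∣ ∏ i, (m - b i)) then ∏ p ∈ D, g p else 0 := by
    intro m _
    rw [prod_one_add, ← sum_filter]
    apply sum_congr _ (fun _ _ => rfl)
    ext D
    simp only [mem_powerset, mem_filter, subset_iff]
    constructor
    · intro h; exact ⟨fun p hp => (h hp).1, fun p hp => (h hp).2⟩
    · rintro ⟨h, h'⟩ p hp; exact ⟨h hp, h' p hp⟩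
  rw [sum_congr rfl h1, sum_comm, prod_one_add, prod_one_add, mul_sum, ← sum_add_distrib]
  apply sum_le_sum
  intro D hD
  have hDT := mem_powerset.1 hD
  rw [← sum_filter, sum_const, nsmul_eq_mul]
  have hc := count_D k b M hM D (fun p hp => hT p (hDT hp)) X 1 hX one_pos (by simp) (by simp)
  calc _ ≤ ((k:ℝ)^D.card * (2*M/((1:ℕ) * ∏ p ∈ D, (p:ℝ)) + 1)) * ∏ p ∈ D, g p := by
        apply mul_le_mul_of_nonneg_right hc (prod_nonneg fun p _ => hg p)
    _ = _ := by
        rw [prod_div_distrib, prod_mul_distrib, prod_const]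
        push_cast
        ring

lemma exp_le_lin (u : ℝ) (h0 : 0 ≤ u) (h2 : u ≤ 2) : Real.exp u ≤ 1 + 8 * u := by
  have h1 : 1 - u ≤ Real.exp (-u) := by linarith [Real.add_one_le_exp (-u)]
  have h3 : Real.exp u * Real.exp (-u) = 1 := by rw [← Real.exp_add]; simp
  have h4 : Real.exp u ≤ 8 := by
    have e : Real.exp 2 = Real.exp 1 * Real.exp 1 := by rw [← Real.exp_add]; norm_num
    have := Real.exp_one_lt_d9
    have h5 : Real.exp u ≤ Real.exp 2 := Real.exp_le_exp.2 h2
    have h6 := Real.exp_pos 1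
    nlinarith
  have h5 := Real.exp_pos u
  nlinarith [mul_le_mul_of_nonneg_left h1 h5.le]

lemma sum_inv_sq (s Z : ℕ) (hs : 0 < s) : ∑ p ∈ (Ioc s Z).filter Nat.Prime, ((p:ℝ)^2)⁻¹ ≤ (s:ℝ)⁻¹ := by
  rcases le_total s Z with h | h
  · calc _ ≤ ∑ p ∈ Ioc s Z, ((p:ℝ)^2)⁻¹ :=
          sum_le_sum_of_subset_of_nonneg (filter_subset _ _) (fun _ _ _ => by positivity)
      _ ≤ _ := sum_Ioc_inv_sq_le_sub hs.ne' h
      _ ≤ _ := by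
        have : (0:ℝ) ≤ (Z:ℝ)⁻¹ := by positivity
        linarith
  · rw [Ioc_eq_empty (by omega)]
    simp

lemma sum_inv_le (s Z : ℕ) : ∑ p ∈ (Ioc s Z).filter Nat.Prime, (p:ℝ)⁻¹ ≤ 1 + Real.log Z := by
  have h := harmonic_le_one_add_log Z
  refine le_trans ?_ h
  rw [harmonic_eq_sum_Icc]
  push_cast
  apply sum_le_sum_of_subset_of_nonneg
  · intro p hp
    simp at hp ⊢
    omega
  · intros; positivity

lemma growth (l w : ℝ) (hw : 1 ≤ w) (hl : l = w^4) :
    16 * w^2 * (1 + 2 * Real.log l) ≤ l/10 + 144 * 1440^3 := by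
  have h1 : Real.log l ≤ 4 * w := by
    rw [hl, Real.log_pow]
    have := Real.log_le_self (x := w) (by linarith)
    push_cast
    linarith
  have h2 : 16 * w^2 * (1 + 2 * Real.log l) ≤ 144 * w^3 := by
    calc _ ≤ 16 * w^2 * (1 + 2 * (4*w)) := by gcongr
      _ ≤ 16 * w^2 * (w + 2 * (4*w)) := by gcongr
      _ = _ := by ring
  rcases le_total w 1440 with h | h
  · have : w^3 ≤ 1440^3 := by gcongr
    have h3 : 0 ≤ l := by rw [hl]; positivity
    linarith
  · have h3 : w^3 * 1440 ≤ w^3 * w := by gcongr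
    have : w^4 = w^3 * w := by ring
    rw [hl, this]
    rw [hl, this] at h2
    linarith

lemma middle (k s : ℕ) (hk : 1 ≤ k) (hks : k ≤ s) (l : ℝ) (hl : 1 ≤ l) (hsl : (s:ℝ)^4 ≤ l)
    (N : ℝ) (hN : Real.exp (l/10) ≤ N) (b : Fin k → ℤ) (X : Finset ℤ) (hX : X ⊆ Icc (-⌊N⌋) ⌊N⌋) :
    ∑ m ∈ X, (∏ p ∈ ((Ioc s ⌊l^2⌋₊).filter Nat.Prime).filter (fun p : ℕ => (p:ℤ) ∣ ∏ i, (m - b i)),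
      (1 + 1/((p:ℝ)-1)))^s ≤ 3 * Real.exp (144 * 1440^3) ^ s * N := by
  set T := (Ioc s ⌊l^2⌋₊).filter Nat.Prime with hT
  have hTp : ∀ p ∈ T, p.Prime ∧ s < p := by
    intro p hp
    simp [hT] at hp
    exact ⟨hp.2, hp.1.1⟩
  have hN0 : 0 < N := lt_of_lt_of_le (Real.exp_pos _) hN
  have hs1 : 1 ≤ s := by omega
  have hsr : (1:ℝ) ≤ s := by exact_mod_cast hs1
  have hksr : (k:ℝ) ≤ s := by exact_mod_cast hks
  set g : ℕ → ℝ := fun p => 16 * s / p with hg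
  have hg0 : ∀ p, 0 ≤ g p := fun p => by simp only [hg]; positivity
  have h1 : ∀ m ∈ X, (∏ p ∈ T.filter (fun p : ℕ => (p:ℤ) ∣ ∏ i, (m - b i)), (1 + 1/((p:ℝ)-1)))^s ≤
      ∏ p ∈ T.filter (fun p : ℕ => (p:ℤ) ∣ ∏ i, (m - b i)), (1 + g p) := by
    intro m _
    rw [← prod_pow]
    apply prod_le_prod
    · intro p hp
      have := G_ge p (hTp p (mem_filter.1 hp).1).1.two_le
      positivity
    · intro p hp
      obtain ⟨hpp, hsp⟩ := hTp p (mem_filter.1 hp).1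
      have h2 := G_ge p hpp.two_le
      have hp0 : (0:ℝ) < p := by exact_mod_cast hpp.pos
      have hsp' : (s:ℝ) ≤ p := by exact_mod_cast hsp.le
      calc _ ≤ Real.exp (2/p) ^ s := by
            gcongr
            exact G_le p hpp.two_le
        _ = Real.exp (s * (2/p)) := (Real.exp_nat_mul _ _).symm
        _ ≤ 1 + 8 * (s * (2/p)) := by
            apply exp_le_lin
            · positivity
            · rw [mul_div_assoc', div_le_iff₀ hp0]; linarith
        _ = _ := by simp only [hg]; ring
  have hM0 : 0 ≤ ⌊N⌋ := Int.floor_nonneg.2 hN0.le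
  have hMN : (⌊N⌋:ℝ) ≤ N := Int.floor_le N
  refine (sum_le_sum h1).trans ?_
  refine (sum_prod_bound k b ⌊N⌋ hM0 X hX T (fun p hp => (hTp p hp).1) g hg0).trans ?_
  have hP1 : ∏ p ∈ T, (1 + k * g p / p) ≤ Real.exp (144 * 1440^3) ^ s := by
    refine (Real.prod_one_add_le_exp_sum T (f := fun p => k * g p / p) (fun p => by have := hg0 p; positivity)).trans ?_
    rw [← Real.exp_nat_mul]
    apply Real.exp_le_exp.2
    calc ∑ p ∈ T, k * g p / p = 16 * k * s * ∑ p ∈ T, ((p:ℝ)^2)⁻¹ := by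
          rw [mul_sum]
          apply sum_congr rfl
          intro p _
          simp only [hg]
          ring
      _ ≤ 16 * k * s * (s:ℝ)⁻¹ := by
          gcongr
          exact sum_inv_sq s _ hs1
      _ = 16 * k := by field_simp
      _ ≤ s * (144 * 1440^3) := by nlinarith
  have hP2 : ∏ p ∈ T, (1 + k * g p) ≤ Real.exp (144 * 1440^3) ^ s * N := by
    refine (Real.prod_one_add_le_exp_sum T (f := fun p => k * g p) (fun p => by have := hg0 p; positivity)).trans ?_
    have hZ : Real.log (⌊l^2⌋₊ : ℕ) ≤ 2 * Real.log l := by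
      have : (0:ℝ) < (⌊l^2⌋₊ : ℕ) := by
        have : 1 ≤ l^2 := one_le_pow₀ hl
        exact_mod_cast Nat.floor_pos.2 this
      have h := Real.log_le_log this (Nat.floor_le (by positivity : (0:ℝ) ≤ l^2))
      rw [Real.log_pow] at h
      exact_mod_cast h
    set w := l ^ ((1:ℝ)/4) with hw
    have hw4 : l = w^4 := by
      rw [hw, ← Real.rpow_natCast, ← Real.rpow_mul (by linarith)]
      norm_num
    have hw1 : 1 ≤ w := Real.one_le_rpow hl (by norm_num)
    have hsw : (s:ℝ) ≤ w := by
      rw [hw4] at hsl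
      exact le_of_pow_le_pow_left₀ (by norm_num) (by linarith) hsl
    have hlog : 0 ≤ Real.log l := Real.log_nonneg hl
    have h3 : ∑ p ∈ T, k * g p ≤ l/10 + 144 * 1440^3 := by
      calc ∑ p ∈ T, k * g p = 16 * (k * s) * ∑ p ∈ T, (p:ℝ)⁻¹ := by
            rw [mul_sum]
            apply sum_congr rfl
            intro p _
            simp only [hg]
            ring
        _ ≤ 16 * (k * s) * (1 + 2 * Real.log l) := by
            gcongr
            exact (sum_inv_le s _).trans (by linarith)
        _ ≤ 16 * w^2 * (1 + 2 * Real.log l) := by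
            rw [sq]
            gcongr
            exact hksr.trans hsw
        _ ≤ _ := growth l w hw1 hw4
    calc _ ≤ Real.exp (l/10 + 144 * 1440^3) := Real.exp_le_exp.2 h3
      _ = Real.exp (144 * 1440^3) * Real.exp (l/10) := by rw [add_comm, Real.exp_add]
      _ ≤ Real.exp (144 * 1440^3) ^ s * N := by
        gcongr
        apply le_self_pow₀
        · exact Real.one_le_exp (by positivity)
        · omega
  have hE : 0 ≤ Real.exp (144 * 1440^3) ^ s := by positivity
  calc _ ≤ 2 * N * Real.exp (144 * 1440^3) ^ s + Real.exp (144 * 1440^3) ^ s * N := by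
        gcongr
    _ = _ := by ring

lemma nat_prod_bound (k : ℕ) (b : Fin k → ℤ) (m : ℤ) (L : ℝ) (hm : |(m:ℝ)| ≤ L)
    (hb : ∀ i : Fin k, |(b i : ℝ)| ≤ L) :
    (((∏ i : Fin k, (m - b i)).natAbs : ℕ) : ℝ) ≤ (2*L)^k := by
  have : (((∏ i : Fin k, (m - b i)).natAbs : ℕ) : ℝ) = ∏ i : Fin k, |(m:ℝ) - b i| := by
    rw [Nat.cast_natAbs, Finset.abs_prod]
    push_cast
    rfl
  rw [this]
  calc _ ≤ ∏ i : Fin k, (2*L) := by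
        apply prod_le_prod (fun _ _ => abs_nonneg _)
        intro i _
        have := abs_sub (m:ℝ) (b i)
        linarith [hb i]
    _ = _ := by simp

/-- pointwise three-range bound -/
lemma ratio_bound (C : ℝ) (hC : ∀ n : ℕ, 2 ≤ n →
      ∏ p ∈ (Icc 1 n).filter Nat.Prime, (1 + 1/((p:ℝ)-1)) ≤ C * Real.log n)
    (n : ℕ) (hn : n ≠ 0) (y Z : ℕ) (hy : 2 ≤ y) (hc : (n.primeFactors.card : ℝ) ≤ 4 * (Z+1)) :
    (n:ℝ) / (Nat.totient n : ℝ) ≤ (C * Real.log y * Real.exp 8) *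
      ∏ p ∈ ((Ioc y Z).filter Nat.Prime).filter (fun p => p ∣ n), (1 + 1/((p:ℝ)-1)) := by
  classical
  rw [ratio_eq n hn]
  set G : ℕ → ℝ := fun p => 1 + 1/((p:ℝ)-1) with hG
  have hpf : ∀ p ∈ n.primeFactors, 1 ≤ G p := fun p hp => G_ge p (Nat.prime_of_mem_primeFactors hp).two_le
  have e1 : ∏ p ∈ n.primeFactors, G p = (∏ p ∈ n.primeFactors.filter (fun p => p ≤ y), G p) *
      ((∏ p ∈ (n.primeFactors.filter (fun p => ¬ p ≤ y)).filter (fun p => p ≤ Z), G p) *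
       (∏ p ∈ (n.primeFactors.filter (fun p => ¬ p ≤ y)).filter (fun p => ¬ p ≤ Z), G p)) := by
    rw [prod_filter_mul_prod_filter_not, prod_filter_mul_prod_filter_not]
  have h1 : ∏ p ∈ n.primeFactors.filter (fun p => p ≤ y), G p ≤ C * Real.log y := by
    refine (prod_mono_one ?_ ?_).trans (hC y hy)
    · intro p hp
      simp at hp ⊢
      exact ⟨⟨hp.1.1.pos, hp.2⟩, hp.1.1⟩
    · intro p hp
      simp at hp
      exact G_ge p hp.2.two_le
  have h2 : ∏ p ∈ (n.primeFactors.filter (fun p => ¬ p ≤ y)).filter (fun p => p ≤ Z), G p ≤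
      ∏ p ∈ ((Ioc y Z).filter Nat.Prime).filter (fun p => p ∣ n), G p := by
    apply prod_mono_one
    · intro p hp
      simp at hp ⊢
      exact ⟨⟨⟨hp.1.2, hp.2⟩, hp.1.1.1⟩, hp.1.1.2.1⟩
    · intro p hp
      simp at hp
      exact G_ge p hp.1.2.two_le
  have h3 : ∏ p ∈ (n.primeFactors.filter (fun p => ¬ p ≤ y)).filter (fun p => ¬ p ≤ Z), G p ≤ Real.exp 8 := by
    apply tail_bound _ Z
    · intro p hp
      simp at hp
      exact ⟨hp.1.1.1, hp.2⟩
    · refine le_trans ?_ hc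
      exact_mod_cast card_le_card ((filter_subset _ _).trans (filter_subset _ _))
  have p1 : 0 ≤ ∏ p ∈ n.primeFactors.filter (fun p => p ≤ y), G p :=
    prod_nonneg fun p hp => by linarith [hpf p (mem_filter.1 hp).1]
  have p2 : 0 ≤ ∏ p ∈ (n.primeFactors.filter (fun p => ¬ p ≤ y)).filter (fun p => p ≤ Z), G p :=
    prod_nonneg fun p hp => by linarith [hpf p (mem_filter.1 (mem_filter.1 hp).1).1]
  have p3 : 0 ≤ ∏ p ∈ (n.primeFactors.filter (fun p => ¬ p ≤ y)).filter (fun p => ¬ p ≤ Z), G p :=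
    prod_nonneg fun p hp => by linarith [hpf p (mem_filter.1 (mem_filter.1 hp).1).1]
  have hCy : 0 ≤ C * Real.log y := p1.trans h1
  rw [e1]
  calc _ ≤ (C * Real.log y) * ((∏ p ∈ ((Ioc y Z).filter Nat.Prime).filter (fun p => p ∣ n), G p) * Real.exp 8) := by
        apply mul_le_mul h1 _ (mul_nonneg p2 p3) hCy
        exact mul_le_mul h2 h3 p3 (p2.trans h2)
    _ = _ := by ring

theorem sum_totient_ratio_linear_pow_le_log_s :
    ∃ c : ℝ, 0 < c ∧
      ∀ (k : ℕ) (b : Fin k → ℤ), Function.Injective b →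
      ∀ a : ℕ, 0 < a → ∀ s : ℕ, 0 < s →
      ∀ x : ℝ, 3 ≤ x → ∀ η : ℝ, Real.log x ^ (-(9 : ℝ) / 10) ≤ η → η ≤ 1 →
      (∀ i : Fin k, |(b i : ℝ)| ≤ Real.log x) →
      2 ≤ k → (k : ℝ) < Real.log (Real.log x) → k < s →
      ∑ m ∈ (Finset.Icc (-⌊η * Real.log x⌋) ⌊η * Real.log x⌋).filter
          (fun m : ℤ => ∀ i : Fin k, m ≠ b i),
          (((a ^ (k + 1) * (∏ i : Fin k, (m - b i)).natAbs : ℕ) : ℝ) /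
            (Nat.totient (a ^ (k + 1) * (∏ i : Fin k, (m - b i)).natAbs) : ℝ)) ^ s ≤
        (c * ((a : ℝ) / (Nat.totient a : ℝ)) * Real.log s) ^ s * (η * Real.log x) := by
  obtain ⟨C, hC1, hC⟩ := mertens3
  set E : ℝ := Real.exp (144 * 1440^3) with hE
  have hE1 : 1 ≤ E := Real.one_le_exp (by positivity)
  have hE0 : 0 < E := by linarith
  have hC0 : 0 < C := by linarith
  refine ⟨15 * C * Real.exp 8 * E, by positivity, ?_⟩
  intro k b _ a ha s hs0 x hx η hη1 hη2 hb hk hkl hks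
  set L := Real.log x with hLdef
  set l := Real.log L with hldef
  have hL0 : 0 < L := Real.log_pos (by linarith)
  have hkr : (2:ℝ) ≤ k := by exact_mod_cast hk
  have hl2 : 2 ≤ l := by linarith
  set N := η * L with hNdef
  have hNl : Real.exp (l/10) ≤ N := by
    have h1 : Real.exp (l/10) = L ^ (-(9 : ℝ) / 10) * L := by
      have h2 : L = Real.exp l := (Real.exp_log hL0).symm
      calc Real.exp (l/10) = Real.exp (l * (-(9:ℝ)/10)) * Real.exp l := by
            rw [← Real.exp_add]
            congr 1
            ring
        _ = _ := by rw [Real.rpow_def_of_pos hL0, ← h2]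
    rw [h1]
    exact mul_le_mul_of_nonneg_right hη1 hL0.le
  have hN1 : 1 ≤ N := le_trans (Real.one_le_exp (by linarith)) hNl
  have hNL : N ≤ L := by rw [hNdef]; nlinarith
  have hs2 : 2 ≤ s := by omega
  have hs3 : (3:ℝ) ≤ s := by exact_mod_cast (by omega : 3 ≤ s)
  have hlogs : 0 < Real.log s := Real.log_pos (by linarith)
  have hksr : (k:ℝ) ≤ s := by exact_mod_cast hks.le
  set R : ℝ := (a : ℝ) / (Nat.totient a : ℝ) with hR
  have hR0 : 0 ≤ R := by positivity
  set X := (Finset.Icc (-⌊N⌋) ⌊N⌋).filter (fun m : ℤ => ∀ i : Fin k, m ≠ b i) with hX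
  have hXs : X ⊆ Finset.Icc (-⌊N⌋) ⌊N⌋ := filter_subset _ _
  set n : ℤ → ℕ := fun m => (∏ i : Fin k, (m - b i)).natAbs with hn
  have hn0 : ∀ m ∈ X, n m ≠ 0 := by
    intro m hm
    have := (mem_filter.1 hm).2
    simp only [hn]
    rw [Int.natAbs_ne_zero, prod_ne_zero_iff]
    intro i _
    exact sub_ne_zero.2 (this i)
  have hMN : (⌊N⌋:ℝ) ≤ N := Int.floor_le N
  have hM0 : 0 ≤ ⌊N⌋ := Int.floor_nonneg.2 (by linarith)
  have homega : ∀ m ∈ X, ((n m).primeFactors.card : ℝ) ≤ 4 * (k * l) := by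
    intro m hm
    apply omega_bound _ (hn0 m hm) k L hL0 (by linarith)
    apply nat_prod_bound k b m L _ hb
    have := mem_Icc.1 (hXs hm)
    have h1 : (m:ℝ) ≤ ⌊N⌋ := by exact_mod_cast this.2
    have h2 : -(⌊N⌋:ℝ) ≤ m := by exact_mod_cast this.1
    rw [abs_le]
    constructor <;> linarith
  have hterm : ∀ m ∈ X, (((a ^ (k + 1) * (∏ i : Fin k, (m - b i)).natAbs : ℕ) : ℝ) /
            (Nat.totient (a ^ (k + 1) * (∏ i : Fin k, (m - b i)).natAbs) : ℝ)) ≤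
            R * ((n m : ℝ) / Nat.totient (n m)) := by
    intro m hm
    exact ratio_mul a (n m) k ha (Nat.pos_of_ne_zero (hn0 m hm))
  have h3s : (3:ℝ) ≤ 3^s := le_self_pow₀ (by norm_num) (by omega)
  have hEs : (1:ℝ) ≤ E^s := one_le_pow₀ hE1
  rcases le_total ((s:ℝ)^4) l with hcase | hcase
  · -- small s
    have hkl2 : (k:ℝ) * l ≤ (⌊l^2⌋₊ : ℕ) + 1 := by
      have := Nat.lt_floor_add_one (l^2)
      nlinarith
    have hmid := middle k s (by omega) hks.le l (by linarith) hcase N hNl b X hXs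
    calc _ ≤ ∑ m ∈ X, (R * (C * Real.log s * Real.exp 8))^s *
          (∏ p ∈ ((Ioc s ⌊l^2⌋₊).filter Nat.Prime).filter (fun p : ℕ => (p:ℤ) ∣ ∏ i, (m - b i)),
      (1 + 1/((p:ℝ)-1)))^s := by
          apply sum_le_sum
          intro m hm
          rw [← mul_pow]
          apply pow_le_pow_left₀ (by positivity)
          refine (hterm m hm).trans ?_
          rw [mul_assoc]
          apply mul_le_mul_of_nonneg_left _ hR0
          have := ratio_bound C hC (n m) (hn0 m hm) s ⌊l^2⌋₊ hs2 (by linarith [homega m hm])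
          refine this.trans (le_of_eq ?_)
          congr 2
          ext p
          simp only [mem_filter, hn, Int.natCast_dvd]
      _ ≤ (R * (C * Real.log s * Real.exp 8))^s * (3 * E ^ s * N) := by
          rw [← mul_sum]
          gcongr
      _ ≤ (R * (C * Real.log s * Real.exp 8))^s * (3^s * 5^s * E ^ s * N) := by
          have : (1:ℝ) ≤ 5^s := one_le_pow₀ (by norm_num)
          have h4 : (3:ℝ) ≤ 3^s * 5^s := by nlinarith
          gcongr
      _ = _ := by
          simp only [← mul_pow, ← mul_assoc]
          congr 2
          ring
  · have hkl2 : (k:ℝ) * l ≤ ((s^5 : ℕ):ℝ) + 1 := by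
      push_cast
      calc (k:ℝ) * l ≤ s * s^4 := by gcongr
        _ ≤ _ := by linarith [(by ring : (s:ℝ) * s^4 = s^5)]
    have hcard : (X.card : ℝ) ≤ 3 * N := by
      have h1 := card_le_card hXs
      rw [Int.card_Icc] at h1
      have h2 : (X.card : ℤ) ≤ 2 * ⌊N⌋ + 1 := by omega
      have h3 : (X.card : ℝ) ≤ 2 * ⌊N⌋ + 1 := by exact_mod_cast h2
      linarith
    have h5 : 2 ≤ s^5 := hs2.trans (Nat.le_self_pow (by norm_num) s)
    calc _ ≤ ∑ m ∈ X, (R * (C * (5 * Real.log s) * Real.exp 8))^s := by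
          apply sum_le_sum
          intro m hm
          apply pow_le_pow_left₀ (by positivity)
          refine (hterm m hm).trans ?_
          apply mul_le_mul_of_nonneg_left _ hR0
          have := ratio_bound C hC (n m) (hn0 m hm) (s^5) (s^5) h5 (by linarith [homega m hm])
          refine this.trans (le_of_eq ?_)
          simp
      _ = X.card * (R * (C * (5 * Real.log s) * Real.exp 8))^s := by simp
      _ ≤ (3 * N) * (R * (C * (5 * Real.log s) * Real.exp 8))^s := by gcongr
      _ ≤ (3^s * E^s * N) * (R * (C * (5 * Real.log s) * Real.exp 8))^s := by
          have h4 : (3:ℝ) ≤ 3^s * E^s := by nlinarith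
          gcongr
      _ = (3^s * E^s * (R * (C * (5 * Real.log s) * Real.exp 8))^s) * N := by ring
      _ = _ := by
          simp only [← mul_pow]
          congr 2
          ring
end

section
/- Let f(n) = b_d·n^d + ... + b_0 be a polynomial with integer coefficients such that b_d > 0, gcd(b_d, ..., b_0) = 1, and f(p) is a positive integer for every prime p. Then there exists a constant C > 0 depending only on f such that for every real x ≥ 2 and every s ∈ ℕ, Σ_{p ≤ x} (f(p)/φ(f(p)))^s ≤ exp(s·log log(s+2) + C·s) · π(x), where the sum runs over primes p ≤ x and π(x) denotes the number of primes not exceeding x. -/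
lemma aux_pi_upper (n : ℕ) (hn : 2 ≤ n) :
    (((Finset.range (n + 1)).filter Nat.Prime).card : ℝ) ≤ 5 * (n / Real.log n) := by
  have hn1 : (2:ℝ) ≤ n := by exact_mod_cast hn
  have h := Chebyshev.pi_le_log4_mul_div (x := (n:ℝ)) (by linarith)
  rw [Nat.floor_natCast, Nat.primeCounting, Nat.primeCounting', Nat.count_eq_card_filter_range] at h
  refine h.trans ?_
  have hlog : 0 < Real.log n := Real.log_pos (by linarith)
  have hs : 0 < √(n:ℝ) := Real.sqrt_pos.2 (by linarith)
  have hss : √(n:ℝ) * √(n:ℝ) = n := Real.mul_self_sqrt (by linarith)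
  rw [Real.log_sqrt (by linarith)]
  have h4 : Real.log 4 = 2 * Real.log 2 := by
    rw [show (4:ℝ) = 2 ^ 2 by norm_num, Real.log_pow]; norm_num
  have h2 := Real.log_two_lt_d9
  have hls : Real.log n ≤ 2 * √(n:ℝ) := by
    have := Real.log_le_sub_one_of_pos hs
    rw [Real.log_sqrt (by linarith)] at this
    linarith
  have e1 : √(n:ℝ) ≤ 2 * (n / Real.log n) := by
    rw [mul_div_assoc', le_div_iff₀ hlog]
    nlinarith
  have e2 : Real.log 4 * n / (Real.log n / 2) = (4 * Real.log 2) * (n / Real.log n) := by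
    rw [h4]; field_simp; norm_num
  rw [e2]
  have : 0 < n / Real.log n := by positivity
  nlinarith

lemma aux_pi_lower (n : ℕ) (hn : 2 ≤ n) :
    n / Real.log n ≤ 10 * (((Finset.range (n + 1)).filter Nat.Prime).card : ℝ) := by
  have hn1 : (2:ℝ) ≤ n := by exact_mod_cast hn
  have h := Chebyshev.pi_ge n
  rw [Nat.primeCounting, Nat.primeCounting', Nat.count_eq_card_filter_range] at h
  have hlog : 0 < Real.log n := Real.log_pos (by linarith)
  have h4 : Real.log 4 = 2 * Real.log 2 := by
    rw [show (4:ℝ) = 2 ^ 2 by norm_num, Real.log_pow]; norm_num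
  have h2 := Real.log_two_lt_d9
  have h2' := Real.log_two_gt_d9
  have h3 : Real.log (n + 1) ≤ (n + 1) / 4 - 1 + Real.log 4 := by
    have := Real.log_le_sub_one_of_pos (x := ((n:ℝ) + 1) / 4) (by positivity)
    rw [Real.log_div (by positivity) (by norm_num)] at this
    linarith
  have : n / Real.log n ≤ 10 * ((n * Real.log 2 - Real.log (n + 1)) / Real.log n) := by
    rw [mul_div_assoc']
    gcongr
    nlinarith
  linarith

lemma aux_fact_dvd (m a n : ℕ) (hm : 0 < m) :
    n.factorial ∣ m ^ n * ∏ k ∈ Finset.Icc 1 n, (m * k + a) := by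
  rw [Nat.dvd_iff_prime_pow_dvd_dvd]
  intro p k hp hk
  have := Fact.mk hp
  by_cases hpm : p ∣ m
  · have h1 : k ≤ n := by
      have := (padicValNat_dvd_iff_le (p := p) (n.factorial_ne_zero)).1 hk
      exact this.trans (padicValNat_factorial_le (p := p) n)
    exact Dvd.dvd.mul_right ((pow_dvd_pow p h1).trans (pow_dvd_pow_of_dvd hpm n)) _
  · apply Dvd.dvd.mul_left
    have hc : Nat.Coprime m (p ^ k) :=
      (Nat.Coprime.pow_left k ((Nat.Prime.coprime_iff_not_dvd hp).2 hpm)).symm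
    obtain ⟨u, hu⟩ : ∃ u : ℕ, ((m : ZMod (p^k)) * u) = 1 := by
      have : NeZero (p ^ k) := ⟨pow_ne_zero _ hp.ne_zero⟩
      refine ⟨((m : ZMod (p^k))⁻¹).val, ?_⟩
      rw [ZMod.natCast_zmod_val]
      exact ZMod.coe_mul_inv_eq_one m hc
    rw [← ZMod.natCast_eq_zero_iff]
    have h1 : ((∏ i ∈ Finset.Icc 1 n, (m * i + a) : ℕ) : ZMod (p^k)) =
        m ^ n * ((∏ i ∈ Finset.Icc 1 n, (i + u * a) : ℕ) : ZMod (p^k)) := by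
      push_cast
      have : (m : ZMod (p^k)) ^ n = ∏ i ∈ Finset.Icc 1 n, (m : ZMod (p^k)) := by simp
      rw [this, ← Finset.prod_mul_distrib]
      refine Finset.prod_congr rfl fun i _ => ?_
      linear_combination (-(a : ZMod (p^k))) * hu
    rw [h1]
    have h2 : (∏ i ∈ Finset.Icc 1 n, (i + u * a) : ℕ) = (u * a + 1).ascFactorial n := by
      rw [Nat.ascFactorial_eq_prod_range, ← Finset.Ico_add_one_right_eq_Icc, Finset.prod_Ico_eq_prod_range]
      refine Finset.prod_congr (by simp) fun i _ => by ring
    rw [h2, (ZMod.natCast_eq_zero_iff _ _).2 (hk.trans (Nat.factorial_dvd_ascFactorial _ _)), mul_zero]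

lemma aux_ap_large (N m a : ℕ) (hN : 2 ≤ N) (hm : 0 < m) (hmN : m * m ≤ N) (ha : a < m) :
    (((((Finset.range (N + 1)).filter Nat.Prime).filter (fun p => p % m = a ∧ N / m < p)).card : ℕ) : ℝ)
      * Real.log N ≤ 4 * (N / m : ℕ) * (1 + Real.log m) := by
  set S := ((Finset.range (N + 1)).filter Nat.Prime).filter (fun p => p % m = a ∧ N / m < p) with hS
  set n := N / m with hn
  have hnm : m ≤ n := (Nat.le_div_iff_mul_le hm).2 hmN
  have hS' : ∀ p ∈ S, p ≤ N ∧ p.Prime ∧ p % m = a ∧ n < p := by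
    intro p hp
    simp only [hS, Finset.mem_filter, Finset.mem_range] at hp
    exact ⟨by omega, hp.1.2, hp.2.1, hp.2.2⟩
  have hP1 : (∏ p ∈ S, p) ∣ ∏ k ∈ Finset.Icc 1 n, (m * k + a) := by
    have hinj : Set.InjOn (fun p => p / m) (S : Set ℕ) := by
      intro p hp q hq h
      have h1 := (hS' p hp).2.2.1
      have h2 := (hS' q hq).2.2.1
      rw [← Nat.div_add_mod p m, ← Nat.div_add_mod q m, h1, h2]
      simp only at h
      rw [h]
    have h1 : (∏ p ∈ S, p) = ∏ k ∈ S.image (fun p => p / m), (m * k + a) := by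
      rw [Finset.prod_image hinj]
      refine Finset.prod_congr rfl fun p hp => ?_
      have := Nat.div_add_mod p m
      rw [(hS' p hp).2.2.1] at this
      exact this.symm
    rw [h1]
    apply Finset.prod_dvd_prod_of_subset
    intro k hk
    obtain ⟨p, hp, rfl⟩ := Finset.mem_image.1 hk
    obtain ⟨g1, g2, g3, g4⟩ := hS' p hp
    rw [Finset.mem_Icc]
    exact ⟨(Nat.le_div_iff_mul_le hm).2 (by omega), Nat.div_le_div_right g1⟩
  have hcop : Nat.Coprime (∏ p ∈ S, p) n.factorial := by
    apply Nat.Coprime.prod_left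
    intro p hp
    obtain ⟨g1, g2, g3, g4⟩ := hS' p hp
    exact (Nat.Prime.coprime_iff_not_dvd g2).2 fun h => by
      have := g2.dvd_factorial.1 h
      omega
  have hdvd : (∏ p ∈ S, p) * n.factorial ∣ m ^ n * ∏ k ∈ Finset.Icc 1 n, (m * k + a) :=
    Nat.Coprime.mul_dvd_of_dvd_of_dvd hcop (Dvd.dvd.mul_left hP1 _) (aux_fact_dvd m a n hm)
  have hle := Nat.le_of_dvd (by
    apply Nat.mul_pos (by positivity)
    apply Finset.prod_pos
    intro k hk
    have := (Finset.mem_Icc.1 hk).1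
    positivity) hdvd
  have hbd : ∏ k ∈ Finset.Icc 1 n, (m * k + a) ≤ m ^ n * (n + 1).factorial := by
    have : m ^ n * (n + 1).factorial = ∏ k ∈ Finset.Icc 1 n, (m * (k + 1)) := by
      rw [Finset.prod_mul_distrib]
      congr 1
      · simp
      · rw [← Finset.prod_range_add_one_eq_factorial, Finset.prod_range_succ', ← Finset.Ico_add_one_right_eq_Icc, Finset.prod_Ico_eq_prod_range]
        simp [add_comm, add_left_comm]
    rw [this]
    apply Finset.prod_le_prod' 
    intro k hk
    nlinarith
  have hP2 : (∏ p ∈ S, p) ≤ m ^ (2 * n) * (n + 1) := by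
    have h1 : (∏ p ∈ S, p) * n.factorial ≤ (m ^ (2 * n) * (n + 1)) * n.factorial := by
      calc _ ≤ _ := hle
        _ ≤ m ^ n * (m ^ n * (n + 1).factorial) := Nat.mul_le_mul_left _ hbd
        _ = _ := by rw [Nat.factorial_succ, two_mul, pow_add]; ring
    exact Nat.le_of_mul_le_mul_right h1 n.factorial_pos
  have hNpos : (0:ℝ) < N := by positivity
  have hlower : (S.card : ℝ) * (Real.log N / 2) ≤ Real.log (∏ p ∈ S, p : ℕ) := by
    push_cast
    rw [Real.log_prod (fun p hp => by exact_mod_cast (hS' p hp).2.1.ne_zero)]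
    rw [← nsmul_eq_mul]
    apply Finset.card_nsmul_le_sum
    intro p hp
    obtain ⟨g1, g2, g3, g4⟩ := hS' p hp
    have : N ≤ p ^ 2 := by
      have : N < m * (n + 1) := by
        rw [hn]; exact Nat.lt_mul_div_succ N hm
      nlinarith
    have h3 : Real.log N ≤ Real.log ((p:ℝ)^2) := Real.log_le_log hNpos (by exact_mod_cast this)
    rw [Real.log_pow] at h3
    push_cast at h3
    linarith
  have hupper : Real.log (∏ p ∈ S, p : ℕ) ≤ 2 * n * Real.log m + n := by
    have hpos : 0 < ∏ p ∈ S, p := Finset.prod_pos fun p hp => (hS' p hp).2.1.pos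
    have h1 : Real.log (∏ p ∈ S, p : ℕ) ≤ Real.log ((m ^ (2 * n) * (n + 1) : ℕ):ℝ) :=
      Real.log_le_log (by exact_mod_cast hpos) (by exact_mod_cast hP2)
    refine h1.trans ?_
    push_cast
    have hm0 : (0:ℝ) < m := by exact_mod_cast hm
    rw [Real.log_mul (by positivity) (by positivity), Real.log_pow]
    have := Real.log_le_sub_one_of_pos (x := (n:ℝ) + 1) (by positivity)
    push_cast
    linarith
  have hl : 0 ≤ Real.log m := Real.log_natCast_nonneg m
  have : 0 ≤ (n:ℝ) := by positivity
  nlinarith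

lemma aux_ap (N m a : ℕ) (hN : 2 ≤ N) (hm : 0 < m) (hmN : m * m ≤ N) (ha : a < m) :
    (((((Finset.range (N + 1)).filter Nat.Prime).filter (fun p => p % m = a)).card : ℕ) : ℝ)
      ≤ 380 * (((Finset.range (N + 1)).filter Nat.Prime).card : ℝ) * (1 / √(m:ℝ)) := by
  have hL := aux_ap_large N m a hN hm hmN ha
  set n := N / m with hn
  have hnm : m ≤ n := (Nat.le_div_iff_mul_le hm).2 hmN
  have hn2 : 2 ≤ n := by
    rcases Nat.lt_or_ge m 2 with h | h
    · have : m = 1 := by omega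
      rw [hn, this]; simpa using hN
    · omega
  have hU := aux_pi_upper n hn2
  have hlow := aux_pi_lower N hN
  have hm0 : (0:ℝ) < m := by exact_mod_cast hm
  have hn2' : (2:ℝ) ≤ n := by exact_mod_cast hn2
  have hN2' : (2:ℝ) ≤ N := by exact_mod_cast hN
  have hlN : 0 < Real.log N := Real.log_pos (by linarith)
  have hln : 0 < Real.log n := Real.log_pos (by linarith)
  have hl : 0 ≤ Real.log m := Real.log_natCast_nonneg m
  have hcard : (((Finset.range (N + 1)).filter Nat.Prime).filter (fun p => p % m = a)).card ≤
      (((Finset.range (N + 1)).filter Nat.Prime).filter (fun p => p % m = a ∧ n < p)).card +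
      ((Finset.range (n + 1)).filter Nat.Prime).card := by
    refine (Finset.card_le_card ?_).trans (Finset.card_union_le _ _)
    intro p hp
    simp only [Finset.mem_filter, Finset.mem_range, Finset.mem_union] at hp ⊢
    by_cases h : n < p
    · exact Or.inl ⟨hp.1, hp.2, h⟩
    · exact Or.inr ⟨by omega, hp.1.2⟩
  have hlogs : Real.log N ≤ 3 * Real.log n := by
    have h1 : N ≤ n ^ 3 := by
      have : N < m * (n + 1) := by rw [hn]; exact Nat.lt_mul_div_succ N hm
      have h5 : m * (n+1) ≤ n * (n + 1) := Nat.mul_le_mul_right _ hnm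
      nlinarith [Nat.mul_le_mul_left n hn2]
    have h3 : Real.log N ≤ Real.log ((n:ℝ)^3) := Real.log_le_log (by linarith) (by exact_mod_cast h1)
    rw [Real.log_pow] at h3
    exact_mod_cast h3
  have hnN : (n:ℝ) ≤ N / m := Nat.cast_div_le
  have h5 : (n:ℝ) / Real.log n ≤ 3 * n / Real.log N := by
    rw [div_le_div_iff₀ hln hlN]; nlinarith
  have hsm : 0 < √(m:ℝ) := Real.sqrt_pos.2 hm0
  have hss : √(m:ℝ) * √(m:ℝ) = m := Real.mul_self_sqrt hm0.le
  have hlm : 1 + Real.log m ≤ 2 * √(m:ℝ) := by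
    have := Real.log_le_sub_one_of_pos hsm
    rw [Real.log_sqrt hm0.le] at this
    linarith
  have hc : ((((Finset.range (N + 1)).filter Nat.Prime).filter (fun p => p % m = a)).card : ℝ) ≤
      ((((Finset.range (N + 1)).filter Nat.Prime).filter (fun p => p % m = a ∧ n < p)).card : ℝ) +
      (((Finset.range (n + 1)).filter Nat.Prime).card : ℝ) := by exact_mod_cast hcard
  have hL' := (le_div_iff₀ hlN).2 hL
  have key : ((((Finset.range (N + 1)).filter Nat.Prime).filter (fun p => p % m = a)).card : ℝ) ≤
      38 * (N / Real.log N) * (1 / √(m:ℝ)) := by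
    calc _ ≤ 4 * (n:ℝ) * (1 + Real.log m) / Real.log N + 5 * (3 * n / Real.log N) := by linarith
      _ = (4 * (1 + Real.log m) + 15) * n / Real.log N := by ring
      _ ≤ (38 * √(m:ℝ)) * (N / m) / Real.log N := by
        gcongr
        nlinarith
      _ = _ := by
        nth_rewrite 2 [← hss]
        field_simp
  refine key.trans ?_
  have : 0 ≤ 1 / √(m:ℝ) := by positivity
  nlinarith

lemma aux_log_sum (n : ℕ) (hn : 1 ≤ n) :
    ∑ p ∈ (Finset.range (n + 1)).filter Nat.Prime, Real.log p / p ≤ Real.log n + Real.log 4 := by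
  set S := (Finset.range (n + 1)).filter Nat.Prime with hS
  have hS' : ∀ p ∈ S, p ≤ n ∧ p.Prime := by
    intro p hp
    simp only [hS, Finset.mem_filter, Finset.mem_range] at hp
    exact ⟨by omega, hp.2⟩
  have hdvd : (∏ p ∈ S, p ^ (n / p)) ∣ n.factorial := by
    apply Finset.prod_dvd_of_isRelPrime
    · intro p hp q hq hpq
      have := (Nat.coprime_primes (hS' p hp).2 (hS' q hq).2).2 hpq
      exact Nat.coprime_iff_isRelPrime.1 (Nat.Coprime.pow _ _ this)
    · intro p hp
      have h1 := hS' p hp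
      rw [Nat.Prime.pow_dvd_factorial_iff h1.2 (b := Nat.log p n + 1) (Nat.lt_succ_self _)]
      have : n / p = n / p ^ 1 := by simp
      rw [this]
      refine Finset.single_le_sum (f := fun i => n / p ^ i) (fun _ _ => Nat.zero_le _) ?_
      rw [Finset.mem_Ico]
      have := Nat.log_pos h1.2.one_lt h1.1
      omega
  have hle := Nat.le_of_dvd n.factorial_pos hdvd
  have hn0 : (0:ℝ) < n := by exact_mod_cast hn
  have h2 : (∏ p ∈ S, p ^ (n / p) : ℕ) ≤ n ^ n := hle.trans n.factorial_le_pow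
  have h3 : Real.log (∏ p ∈ S, p ^ (n / p) : ℕ) ≤ n * Real.log n := by
    have : Real.log (∏ p ∈ S, p ^ (n / p) : ℕ) ≤ Real.log ((n:ℝ) ^ n) :=
      Real.log_le_log (by
        have : 0 < ∏ p ∈ S, p ^ (n / p) := Finset.prod_pos fun p hp => pow_pos (hS' p hp).2.pos _
        exact_mod_cast this) (by exact_mod_cast h2)
    rwa [Real.log_pow] at this
  push_cast at h3
  rw [Real.log_prod (fun p hp => pow_ne_zero _ (by exact_mod_cast (hS' p hp).2.ne_zero))] at h3
  have hth := Chebyshev.theta_le_log4_mul_x hn0.le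
  have hth2 : Chebyshev.theta n = ∑ p ∈ S, Real.log p := by
    rw [Chebyshev.theta_eq_sum_Icc, Nat.floor_natCast]
    refine Finset.sum_congr ?_ fun _ _ => rfl
    ext p
    simp [hS, Nat.lt_succ_iff]
  rw [hth2] at hth
  have h4 : n * ∑ p ∈ S, Real.log p / p ≤ ∑ p ∈ S, Real.log ((p:ℝ) ^ (n / p)) + ∑ p ∈ S, Real.log p := by
    rw [Finset.mul_sum, ← Finset.sum_add_distrib]
    refine Finset.sum_le_sum fun p hp => ?_
    rw [Real.log_pow]
    have hp0 : (0:ℝ) < p := by exact_mod_cast (hS' p hp).2.pos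
    have h5 : (n:ℝ) / p ≤ (n / p : ℕ) + 1 := by
      rw [div_le_iff₀ hp0]
      have : n < p * (n / p + 1) := Nat.lt_mul_div_succ n (hS' p hp).2.pos
      have : (n:ℝ) < p * ((n / p : ℕ) + 1) := by exact_mod_cast this
      linarith
    have h6 : 0 ≤ Real.log p := Real.log_natCast_nonneg p
    calc (n:ℝ) * (Real.log p / p) = (n / p) * Real.log p := by ring
      _ ≤ ((n / p : ℕ) + 1) * Real.log p := by gcongr
      _ = _ := by ring
  have : n * ∑ p ∈ S, Real.log p / p ≤ n * (Real.log n + Real.log 4) := by linarith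
  exact le_of_mul_le_mul_left this hn0

lemma aux_zeta_partial (σ : ℝ) (hσ : 0 < σ) (n : ℕ) :
    ∑ k ∈ Finset.range (n + 1), ((k : ℝ) + 1) ^ (-1 - σ) ≤
      1 + 1 / σ * (1 - ((n : ℝ) + 1) ^ (-σ)) := by
  induction n with
  | zero => simp
  | succ n ih =>
    rw [Finset.sum_range_succ]
    push_cast
    set u : ℝ := (n:ℝ) + 1 with hu
    have hu0 : 0 < u := by positivity
    have h1 : 1 / (u + 1) ≤ Real.log (u + 1) - Real.log u := by
      have := Real.one_sub_inv_le_log_of_pos (x := (u + 1) / u) (by positivity)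
      rw [Real.log_div (by positivity) (by positivity)] at this
      refine le_trans (le_of_eq ?_) this
      field_simp; ring
    have h2 : 1 + σ / (u + 1) ≤ u ^ (-σ) * (u + 1) ^ σ := by
      rw [Real.rpow_def_of_pos hu0, Real.rpow_def_of_pos (by positivity), ← Real.exp_add]
      have := Real.add_one_le_exp (Real.log u * -σ + Real.log (u + 1) * σ)
      have h3 : σ / (u + 1) = σ * (1 / (u + 1)) := by ring
      nlinarith
    have h4 : (u + 1) ^ (-1 - σ) = (u + 1) ^ (-σ) / (u + 1) := by
      rw [show -1 - σ = -σ - 1 by ring, Real.rpow_sub_one (by positivity)]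
    have h5 : (u + 1) ^ σ * (u + 1) ^ (-σ) = 1 := by
      rw [← Real.rpow_add (by positivity)]; simp
    have h6 : 0 < (u + 1) ^ (-σ) := by positivity
    have h7 : (1 + σ / (u + 1)) * (u + 1) ^ (-σ) ≤ u ^ (-σ) := by
      calc _ ≤ (u ^ (-σ) * (u + 1) ^ σ) * (u + 1) ^ (-σ) := by gcongr
        _ = _ := by rw [mul_assoc, h5, mul_one]
    have h8 : (u + 1) ^ (-σ) / (u + 1) ≤ 1 / σ * (u ^ (-σ) - (u + 1) ^ (-σ)) := by
      rw [div_mul_eq_mul_div, le_div_iff₀ hσ, one_mul]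
      have : (u + 1) ^ (-σ) / (u + 1) * σ = σ / (u + 1) * (u + 1) ^ (-σ) := by ring
      linarith
    rw [h4]
    have h9 : 1 / σ * (1 - (u + 1) ^ (-σ)) = 1 / σ * (1 - u ^ (-σ)) + 1 / σ * (u ^ (-σ) - (u + 1) ^ (-σ)) := by ring
    linarith

/-- completely multiplicative function -/
noncomputable def auxPow (r : ℝ) : ℕ →* ℝ where
  toFun n := (n : ℝ) ^ r
  map_one' := by simp
  map_mul' a b := by
    push_cast
    rw [Real.mul_rpow (by positivity) (by positivity)]

lemma aux_prime_zeta (σ : ℝ) (hσ : 0 < σ) (N : ℕ) :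
    ∑ p ∈ N.primesBelow, (p : ℝ) ^ (-1 - σ) ≤ Real.log (1 + 1 / σ) := by
  have hsum : Summable (auxPow (-1 - σ)) :=
    Real.summable_nat_rpow.2 (by linarith)
  have h := EulerProduct.prod_primesBelow_geometric_eq_tsum_smoothNumbers hsum N
  have hnn : ∀ n : ℕ, 0 ≤ auxPow (-1 - σ) n := fun n => by
    change 0 ≤ (n:ℝ) ^ (-1 - σ); positivity
  have h1 : ∑' m : N.smoothNumbers, auxPow (-1 - σ) m ≤ ∑' m : ℕ, auxPow (-1 - σ) m :=
    Summable.tsum_subtype_le _ _ hnn hsum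
  have h2 : ∑' m : ℕ, auxPow (-1 - σ) m ≤ 1 + 1 / σ := by
    rw [hsum.tsum_eq_zero_add]
    have h0 : auxPow (-1 - σ) 0 = 0 := by
      change ((0:ℕ):ℝ) ^ (-1 - σ) = 0
      rw [Nat.cast_zero, Real.zero_rpow (by linarith)]
    rw [h0, zero_add]
    apply Real.tsum_le_of_sum_range_le (fun n => hnn _)
    intro n
    have h3 := aux_zeta_partial σ hσ n
    have h4 : ∑ k ∈ Finset.range n, auxPow (-1 - σ) (k + 1) ≤
        ∑ k ∈ Finset.range (n + 1), ((k : ℝ) + 1) ^ (-1 - σ) := by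
      have : ∀ k : ℕ, auxPow (-1 - σ) (k + 1) = ((k : ℝ) + 1) ^ (-1 - σ) := fun k => by
        change ((k + 1 : ℕ):ℝ) ^ (-1 - σ) = _
        push_cast; rfl
      simp only [this]
      apply Finset.sum_le_sum_of_subset_of_nonneg
      · exact Finset.range_subset_range.2 (by omega)
      · intros; positivity
    have h5 : 0 < ((n : ℝ) + 1) ^ (-σ) := by positivity
    have h6 : 0 < 1 / σ := by positivity
    nlinarith
  have hlt : ∀ p ∈ N.primesBelow, auxPow (-1 - σ) p < 1 := by
    intro p hp
    have hp1 := (Nat.prime_of_mem_primesBelow hp).one_lt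
    change (p:ℝ) ^ (-1 - σ) < 1
    exact Real.rpow_lt_one_of_one_lt_of_neg (by exact_mod_cast hp1) (by linarith)
  have hprod : ∏ p ∈ N.primesBelow, (1 - auxPow (-1 - σ) p)⁻¹ ≤ 1 + 1 / σ := by
    rw [h]; exact h1.trans h2
  have hexp : Real.exp (∑ p ∈ N.primesBelow, (p : ℝ) ^ (-1 - σ)) ≤ 1 + 1 / σ := by
    refine le_trans ?_ hprod
    rw [Real.exp_sum]
    apply Finset.prod_le_prod
    · intros; positivity
    · intro p hp
      have := hlt p hp
      have h7 := Real.add_one_le_exp (-(auxPow (-1 - σ) p))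
      rw [Real.exp_neg] at h7
      have h8 : Real.exp ((p:ℝ) ^ (-1 - σ)) = Real.exp (auxPow (-1 - σ) p) := rfl
      rw [h8, le_inv_comm₀ (Real.exp_pos _) (by linarith)]
      linarith
  rw [Real.le_log_iff_exp_le (by positivity)]
  exact hexp

lemma aux_mertens_s7 (s : ℕ) (hs : 0 < s) :
    ∑ p ∈ (Finset.range (s + 1)).filter Nat.Prime, (1 : ℝ) / p ≤
      Real.log (Real.log (s + 2)) + 5 := by
  set n := s + 2 with hn
  have hcast : ((s:ℝ) + 2) = n := by simp [hn]
  rw [hcast]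
  have hn3 : (3:ℝ) ≤ n := by exact_mod_cast (by omega : 3 ≤ n)
  set L := Real.log n with hL
  have hL1 : 1 ≤ L := by
    rw [hL, Real.le_log_iff_exp_le (by linarith)]
    have := Real.exp_one_lt_d9
    linarith
  have hA := aux_log_sum n (by omega)
  have hB := aux_prime_zeta (1 / L) (by positivity) (n + 1)
  have hS : (n + 1).primesBelow = (Finset.range (n + 1)).filter Nat.Prime := rfl
  rw [hS, one_div_one_div] at hB
  have h1 : ∑ p ∈ (Finset.range (s + 1)).filter Nat.Prime, (1 : ℝ) / p ≤
      ∑ p ∈ (Finset.range (n + 1)).filter Nat.Prime, (1 : ℝ) / p := by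
    apply Finset.sum_le_sum_of_subset_of_nonneg
    · exact Finset.filter_subset_filter _ (Finset.range_subset_range.2 (by omega))
    · intros; positivity
  have h2 : ∑ p ∈ (Finset.range (n + 1)).filter Nat.Prime, (1 : ℝ) / p ≤
      ∑ p ∈ (Finset.range (n + 1)).filter Nat.Prime, (p : ℝ) ^ (-1 - 1 / L) +
      1 / L * ∑ p ∈ (Finset.range (n + 1)).filter Nat.Prime, Real.log p / p := by
    rw [Finset.mul_sum, ← Finset.sum_add_distrib]
    refine Finset.sum_le_sum fun p hp => ?_
    have hp0 : (0:ℝ) < p := by exact_mod_cast (Finset.mem_filter.1 hp).2.pos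
    have h3 : (p:ℝ) ^ (-1 - 1 / L) = (p:ℝ) ^ (-(1 / L)) / p := by
      rw [show -1 - 1 / L = -(1 / L) - 1 by ring, Real.rpow_sub_one (by positivity)]
    rw [h3, Real.rpow_def_of_pos hp0]
    have h4 := Real.add_one_le_exp (Real.log p * -(1 / L))
    have : (1:ℝ) / p ≤ (Real.exp (Real.log p * -(1 / L)) + 1 / L * Real.log p) / p := by
      gcongr
      linarith
    refine this.trans (le_of_eq (by ring))
  have h5 : Real.log (1 + L) ≤ Real.log 2 + Real.log L := by
    rw [← Real.log_mul (by norm_num) (by linarith)]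
    exact Real.log_le_log (by linarith) (by linarith)
  have h4 : Real.log 4 = 2 * Real.log 2 := by
    rw [show (4:ℝ) = 2 ^ 2 by norm_num, Real.log_pow]; norm_num
  have hlt := Real.log_two_lt_d9
  have h6 : 1 / L * ∑ p ∈ (Finset.range (n + 1)).filter Nat.Prime, Real.log p / p ≤ 3 := by
    rw [div_mul_eq_mul_div, one_mul, div_le_iff₀ (by linarith)]
    linarith
  linarith

lemma aux_dvd_mod (f : Polynomial ℤ) (q a b : ℕ) (h : a % q = b % q) :
    (q:ℤ) ∣ f.eval (a:ℤ) ↔ (q:ℤ) ∣ f.eval (b:ℤ) := by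
  have h1 : (q:ℤ) ∣ (a:ℤ) - b := by
    have : (a:ℤ) ≡ b [ZMOD q] := by exact_mod_cast (show a ≡ b [MOD q] from h)
    exact (Int.modEq_iff_dvd.1 this.symm)
  have h2 := h1.trans (Polynomial.sub_dvd_eval_sub (a:ℤ) (b:ℤ) f)
  exact dvd_iff_dvd_of_dvd_sub h2

lemma aux_roots_prime (f : Polynomial ℤ) (hcont : f.content = 1) (q : ℕ) (hq : q.Prime) :
    ((Finset.range q).filter (fun a : ℕ => (q:ℤ) ∣ f.eval (a:ℤ))).card ≤ f.natDegree := by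
  have := Fact.mk hq
  set g := f.map (Int.castRingHom (ZMod q)) with hg
  have hg0 : g ≠ 0 := by
    intro h0
    have : (q:ℤ) ∣ f.content := by
      rw [Polynomial.dvd_content_iff_C_dvd, Polynomial.C_dvd_iff_dvd_coeff]
      intro i
      have h1 : g.coeff i = 0 := by rw [h0]; simp
      rw [hg, Polynomial.coeff_map] at h1
      exact (ZMod.intCast_zmod_eq_zero_iff_dvd _ _).1 h1
    rw [hcont] at this
    have h2 := Int.natAbs_dvd_natAbs.2 this
    simp at h2
    exact hq.one_lt.ne' h2
  refine le_trans ?_ ((Polynomial.card_roots' g).trans Polynomial.natDegree_map_le)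
  refine le_trans ?_ (Multiset.toFinset_card_le g.roots)
  apply Finset.card_le_card_of_injOn (fun a : ℕ => (a : ZMod q))
  · intro a ha
    have ha' := (Finset.mem_filter.1 ha).2
    rw [Finset.mem_coe, Multiset.mem_toFinset, Polynomial.mem_roots hg0, Polynomial.IsRoot]
    have h1 : Polynomial.eval (a : ZMod q) g = ((f.eval (a:ℤ) : ℤ) : ZMod q) := by
      have := Polynomial.eval_intCast_map (Int.castRingHom (ZMod q)) f (a:ℤ)
      simpa [hg] using this
    rw [h1]
    exact (ZMod.intCast_zmod_eq_zero_iff_dvd _ _).2 ha'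
  · intro a ha b hb hab
    have ha' := Finset.mem_range.1 (Finset.mem_filter.1 ha).1
    have hb' := Finset.mem_range.1 (Finset.mem_filter.1 hb).1
    have := (ZMod.natCast_eq_natCast_iff' a b q).1 hab
    rwa [Nat.mod_eq_of_lt ha', Nat.mod_eq_of_lt hb'] at this

lemma aux_roots (f : Polynomial ℤ) (hcont : f.content = 1) (T : Finset ℕ)
    (hT : ∀ q ∈ T, q.Prime) :
    ((Finset.range (∏ q ∈ T, q)).filter (fun a : ℕ => ∀ q ∈ T, (q:ℤ) ∣ f.eval (a:ℤ))).card ≤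
      f.natDegree ^ T.card := by
  induction T using Finset.induction_on with
  | empty => simp
  | insert q T hqT ih =>
    have hqp := hT q (Finset.mem_insert_self _ _)
    have hTp : ∀ r ∈ T, r.Prime := fun r hr => hT r (Finset.mem_insert_of_mem hr)
    rw [Finset.card_insert_of_notMem hqT, pow_succ', Finset.prod_insert hqT]
    refine le_trans ?_ (Nat.mul_le_mul (aux_roots_prime f hcont q hqp) (ih hTp))
    rw [← Finset.card_product]
    set m := ∏ q ∈ T, q with hm
    have hm0 : 0 < m := Finset.prod_pos fun r hr => (hTp r hr).pos
    have hcop : Nat.Coprime q m := by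
      apply Nat.Coprime.prod_right
      intro r hr
      exact (Nat.coprime_primes hqp (hTp r hr)).2 (fun h => hqT (h ▸ hr))
    apply Finset.card_le_card_of_injOn (fun a : ℕ => (a % q, a % m))
    · intro a ha
      have ha' := (Finset.mem_filter.1 ha).2
      simp only [Finset.coe_product, Set.mem_prod, Finset.mem_coe, Finset.mem_filter, Finset.mem_range]
      refine ⟨⟨Nat.mod_lt _ hqp.pos, ?_⟩, Nat.mod_lt _ hm0, ?_⟩
      · exact (aux_dvd_mod f q _ a (Nat.mod_mod _ _)).2 (ha' q (Finset.mem_insert_self _ _))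
      · intro r hr
        exact (aux_dvd_mod f r _ a (Nat.mod_mod_of_dvd _ (Finset.dvd_prod_of_mem _ hr))).2
          (ha' r (Finset.mem_insert_of_mem hr))
    · intro a ha b hb hab
      have ha' := Finset.mem_range.1 (Finset.mem_filter.1 ha).1
      have hb' := Finset.mem_range.1 (Finset.mem_filter.1 hb).1
      simp only [Prod.mk.injEq] at hab
      have : a ≡ b [MOD q * m] := (Nat.modEq_and_modEq_iff_modEq_mul hcop).1 ⟨hab.1, hab.2⟩
      exact Nat.ModEq.eq_of_lt_of_lt this ha' hb'

lemma aux_count_s7 (f : Polynomial ℤ) (hcont : f.content = 1) (N : ℕ) (hN : 2 ≤ N) (T : Finset ℕ)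
    (hT : ∀ q ∈ T, q.Prime) (hTN : (∏ q ∈ T, q) * (∏ q ∈ T, q) ≤ N) :
    ((((Finset.range (N + 1)).filter Nat.Prime).filter
      (fun p : ℕ => ∀ q ∈ T, (q:ℤ) ∣ f.eval (p:ℤ))).card : ℝ) ≤
      380 * (((Finset.range (N + 1)).filter Nat.Prime).card : ℝ) *
        ∏ q ∈ T, ((f.natDegree : ℝ) * (1 / √(q:ℝ))) := by
  set m := ∏ q ∈ T, q with hm
  have hm0 : 0 < m := Finset.prod_pos fun r hr => (hT r hr).pos
  set P := (Finset.range (N + 1)).filter Nat.Prime with hP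
  set R := (Finset.range m).filter (fun a : ℕ => ∀ q ∈ T, (q:ℤ) ∣ f.eval (a:ℤ)) with hR
  have h1 : (P.filter (fun p : ℕ => ∀ q ∈ T, (q:ℤ) ∣ f.eval (p:ℤ))).card ≤
      ∑ a ∈ R, (P.filter (fun p => p % m = a)).card := by
    refine le_trans (Finset.card_le_card ?_) (Finset.card_biUnion_le)
    intro p hp
    rw [Finset.mem_filter] at hp
    rw [Finset.mem_biUnion]
    refine ⟨p % m, ?_, Finset.mem_filter.2 ⟨hp.1, rfl⟩⟩
    rw [hR, Finset.mem_filter, Finset.mem_range]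
    refine ⟨Nat.mod_lt _ hm0, fun q hq => ?_⟩
    exact (aux_dvd_mod f q _ p (Nat.mod_mod_of_dvd _ (Finset.dvd_prod_of_mem _ hq))).2 (hp.2 q hq)
  have h2 : ((P.filter (fun p : ℕ => ∀ q ∈ T, (q:ℤ) ∣ f.eval (p:ℤ))).card : ℝ) ≤
      ∑ a ∈ R, ((P.filter (fun p => p % m = a)).card : ℝ) := by exact_mod_cast h1
  have h3 : ∑ a ∈ R, ((P.filter (fun p => p % m = a)).card : ℝ) ≤
      R.card • (380 * (P.card : ℝ) * (1 / √(m:ℝ))) :=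
    Finset.sum_le_card_nsmul _ _ _ fun a ha =>
      aux_ap N m a hN hm0 hTN (Finset.mem_range.1 (Finset.mem_filter.1 ha).1)
  have h4 : (R.card : ℝ) ≤ (f.natDegree : ℝ) ^ T.card := by exact_mod_cast aux_roots f hcont T hT
  have h5 : ∏ q ∈ T, ((f.natDegree : ℝ) * (1 / √(q:ℝ))) = (f.natDegree : ℝ) ^ T.card * (1 / √(m:ℝ)) := by
    rw [Finset.prod_mul_distrib, Finset.prod_const]
    congr 1
    rw [hm]
    push_cast
    rw [Real.sqrt_eq_rpow, ← Real.finsetProd_rpow _ _ (by intros; positivity)]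
    simp [Real.sqrt_eq_rpow]
  rw [h5]
  refine h2.trans (h3.trans ?_)
  rw [nsmul_eq_mul]
  calc _ ≤ (f.natDegree : ℝ) ^ T.card * (380 * (P.card : ℝ) * (1 / √(m:ℝ))) := by gcongr
    _ = _ := by ring

lemma aux_middle (f : Polynomial ℤ) (hcont : f.content = 1) (N : ℕ) (hN : 2 ≤ N) (s : ℕ) (K : ℝ)
    (hK : ∀ Q : Finset ℕ, ∑ q ∈ Q, (1:ℝ) / (q * √(q:ℝ)) ≤ K)
    (Q : Finset ℕ) (hQ : ∀ q ∈ Q, q.Prime ∧ s < q ∧ q ≤ Nat.log 16 N) :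
    ∑ p ∈ (Finset.range (N + 1)).filter Nat.Prime,
      Real.exp (s * ∑ q ∈ Q.filter (fun q : ℕ => (q:ℤ) ∣ f.eval (p:ℤ)), (1:ℝ) / q) ≤
      380 * (((Finset.range (N + 1)).filter Nat.Prime).card : ℝ) *
        Real.exp (2 * f.natDegree * K * s) := by
  set P := (Finset.range (N + 1)).filter Nat.Prime with hP
  have hstep : ∀ p ∈ P, Real.exp (s * ∑ q ∈ Q.filter (fun q : ℕ => (q:ℤ) ∣ f.eval (p:ℤ)), (1:ℝ) / q) ≤
      ∑ T ∈ Q.powerset, (∏ q ∈ T, (2 * (s:ℝ) / q)) *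
        (if ∀ q ∈ T, (q:ℤ) ∣ f.eval (p:ℤ) then 1 else 0) := by
    intro p _
    rw [Finset.mul_sum, Real.exp_sum]
    calc _ ≤ ∏ q ∈ Q.filter (fun q : ℕ => (q:ℤ) ∣ f.eval (p:ℤ)), (1 + 2 * (s:ℝ) / q) := by
          apply Finset.prod_le_prod
          · intros; positivity
          · intro q hq
            have hq' := hQ q (Finset.mem_filter.1 hq).1
            have hq0 : (0:ℝ) < q := by exact_mod_cast hq'.1.pos
            have hsq : (s:ℝ) ≤ q := by exact_mod_cast hq'.2.1.le
            set t : ℝ := s * (1 / q) with ht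
            have ht0 : 0 ≤ t := by positivity
            have ht1 : t ≤ 1 := by
              rw [ht, mul_one_div, div_le_one hq0]; exact hsq
            have h1 := Real.abs_exp_sub_one_sub_id_le (x := t) (by rw [abs_of_nonneg ht0]; exact ht1)
            have h2 := (abs_le.1 h1).2
            have h3 : 2 * (s:ℝ) / q = 2 * t := by rw [ht]; ring
            rw [h3]
            nlinarith
      _ = ∑ T ∈ (Q.filter (fun q : ℕ => (q:ℤ) ∣ f.eval (p:ℤ))).powerset, ∏ q ∈ T, (2 * (s:ℝ) / q) :=
          Finset.prod_one_add _
      _ = ∑ T ∈ (Q.filter (fun q : ℕ => (q:ℤ) ∣ f.eval (p:ℤ))).powerset, (∏ q ∈ T, (2 * (s:ℝ) / q)) *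
            (if ∀ q ∈ T, (q:ℤ) ∣ f.eval (p:ℤ) then 1 else 0) := by
          refine Finset.sum_congr rfl fun T hT => ?_
          rw [if_pos, mul_one]
          intro q hq
          exact (Finset.mem_filter.1 (Finset.mem_powerset.1 hT hq)).2
      _ ≤ _ := by
          apply Finset.sum_le_sum_of_subset_of_nonneg
          · exact Finset.powerset_mono.2 (Finset.filter_subset _ _)
          · intro T _ _
            apply mul_nonneg
            · apply Finset.prod_nonneg; intros; positivity
            · split_ifs <;> norm_num
  refine (Finset.sum_le_sum hstep).trans ?_
  rw [Finset.sum_comm]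
  have hbd : ∀ T ∈ Q.powerset, ∑ p ∈ P, (∏ q ∈ T, (2 * (s:ℝ) / q)) *
        (if ∀ q ∈ T, (q:ℤ) ∣ f.eval (p:ℤ) then 1 else 0) ≤
      380 * (P.card : ℝ) * ∏ q ∈ T, (2 * f.natDegree * s * ((1:ℝ) / (q * √(q:ℝ)))) := by
    intro T hT
    have hTQ := Finset.mem_powerset.1 hT
    rw [← Finset.mul_sum, ← Finset.sum_filter, Finset.sum_const, nsmul_eq_mul, mul_one]
    have hprod : (∏ q ∈ T, q) ≤ 4 ^ (Nat.log 16 N) := by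
      refine le_trans ?_ (primorial_le_four_pow (Nat.log 16 N))
      apply Finset.prod_le_prod_of_subset_of_one_le'
      · intro q hq
        have := hQ q (hTQ hq)
        rw [Finset.mem_filter, Finset.mem_range]
        exact ⟨by omega, this.1⟩
      · intro q hq _
        exact (Finset.mem_filter.1 hq).2.one_lt.le
    have hTN : (∏ q ∈ T, q) * (∏ q ∈ T, q) ≤ N := by
      refine (Nat.mul_le_mul hprod hprod).trans ?_
      rw [← mul_pow]
      exact Nat.pow_log_le_self 16 (by omega)
    have h1 := aux_count_s7 f hcont N hN T (fun q hq => (hQ q (hTQ hq)).1) hTN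
    have h2 : 0 ≤ ∏ q ∈ T, (2 * (s:ℝ) / q) := by
      apply Finset.prod_nonneg; intros; positivity
    refine (mul_le_mul_of_nonneg_left h1 h2).trans (le_of_eq ?_)
    rw [mul_left_comm, ← Finset.prod_mul_distrib]
    congr 1
    refine Finset.prod_congr rfl fun q _ => ?_
    rw [one_div, one_div, mul_inv, div_eq_mul_inv]; ring
  refine (Finset.sum_le_sum hbd).trans ?_
  rw [← Finset.mul_sum, ← Finset.prod_one_add]
  gcongr
  calc ∏ q ∈ Q, (1 + 2 * f.natDegree * s * ((1:ℝ) / (q * √(q:ℝ)))) ≤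
      ∏ q ∈ Q, Real.exp (2 * f.natDegree * s * ((1:ℝ) / (q * √(q:ℝ)))) := by
        apply Finset.prod_le_prod
        · intros; positivity
        · intro q _
          rw [add_comm]
          exact Real.add_one_le_exp _
    _ = Real.exp (2 * f.natDegree * s * ∑ q ∈ Q, ((1:ℝ) / (q * √(q:ℝ)))) := by
        rw [← Real.exp_sum, Finset.mul_sum]
    _ ≤ _ := by
        apply Real.exp_le_exp.2
        calc 2 * (f.natDegree:ℝ) * s * ∑ q ∈ Q, ((1:ℝ) / (q * √(q:ℝ))) ≤ 2 * (f.natDegree:ℝ) * s * K := by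
              gcongr; exact hK Q
          _ = _ := by ring

lemma aux_ratio_s7 (n : ℕ) (hn : 0 < n) (K : ℝ)
    (hK : ∀ Q : Finset ℕ, ∑ q ∈ Q, (1:ℝ) / (q * √(q:ℝ)) ≤ K) :
    (n : ℝ) / (Nat.totient n : ℝ) ≤ Real.exp (∑ q ∈ n.primeFactors, (1:ℝ) / q + 2 * K) := by
  have h1 : (Nat.totient n : ℝ) = n * ∏ p ∈ n.primeFactors, (1 - (p:ℝ)⁻¹) := by
    have := Nat.totient_eq_mul_prod_factors n
    have h := congrArg (fun r : ℚ => (r : ℝ)) this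
    push_cast at h
    exact h
  have hn0 : (0:ℝ) < n := by exact_mod_cast hn
  have h2 : (n : ℝ) / (Nat.totient n : ℝ) = ∏ p ∈ n.primeFactors, (1 - (p:ℝ)⁻¹)⁻¹ := by
    rw [h1, Finset.prod_inv_distrib, div_mul_eq_div_div, div_self hn0.ne', one_div]
  rw [h2]
  calc ∏ p ∈ n.primeFactors, (1 - (p:ℝ)⁻¹)⁻¹ ≤
      ∏ p ∈ n.primeFactors, Real.exp (1 / p + 2 * (1 / (p * √(p:ℝ)))) := by
        apply Finset.prod_le_prod
        · intro p hp
          have : (1:ℝ) ≤ p := by exact_mod_cast (Nat.prime_of_mem_primeFactors hp).one_lt.le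
          have := inv_le_one_of_one_le₀ this
          apply inv_nonneg.2; linarith
        · intro p hp
          have hp2 : (2:ℝ) ≤ p := by exact_mod_cast (Nat.prime_of_mem_primeFactors hp).two_le
          have hp0 : (0:ℝ) < p := by linarith
          have hs : √(p:ℝ) ≤ p := by
            rw [Real.sqrt_le_left hp0.le]; nlinarith
          have hs0 : 0 < √(p:ℝ) := Real.sqrt_pos.2 hp0
          have e1 : (1 - (p:ℝ)⁻¹)⁻¹ = 1 + 1 / (p - 1) := by
            have : (p:ℝ) - 1 ≠ 0 := by linarith
            field_simp; ring
          have e2 : 1 / ((p:ℝ) - 1) ≤ 1 / p + 2 * (1 / (p * p)) := by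
            rw [div_add' _ _ _ hp0.ne', div_le_div_iff₀ (by linarith) hp0]
            have : 2 * (1 / ((p:ℝ) * p)) * p = 2 / p := by field_simp
            rw [this]
            have h3 : (1 + 2 / (p:ℝ)) * (p - 1) = p + 1 - 2 / p := by field_simp; ring
            have h4 : 2 / (p:ℝ) ≤ 1 := by rw [div_le_one hp0]; exact hp2
            rw [h3]; linarith
          have e3 : 1 / ((p:ℝ) * p) ≤ 1 / (p * √(p:ℝ)) := by gcongr
          rw [e1]
          have := Real.add_one_le_exp (1 / (p:ℝ) + 2 * (1 / (p * √(p:ℝ))))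
          linarith
    _ = Real.exp (∑ q ∈ n.primeFactors, (1:ℝ) / q + 2 * ∑ q ∈ n.primeFactors, (1:ℝ) / (q * √(q:ℝ))) := by
        rw [← Real.exp_sum, Finset.mul_sum, Finset.sum_add_distrib]
    _ ≤ _ := by
        apply Real.exp_le_exp.2
        have := hK n.primeFactors
        linarith

lemma aux_tail (n N : ℕ) (hn : 0 < n) (hN : 2 ≤ N) :
    ∑ q ∈ n.primeFactors.filter (fun q => Nat.log 16 N < q), (1:ℝ) / q ≤
      4 * (Real.log n / Real.log N) := by
  have hN2 : (2:ℝ) ≤ N := by exact_mod_cast hN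
  have hlN : 0 < Real.log N := Real.log_pos (by linarith)
  have hl2 : 0 < Real.log 2 := Real.log_pos (by norm_num)
  have hl16 : Real.log 16 = 4 * Real.log 2 := by
    rw [show (16:ℝ) = 2 ^ 4 by norm_num, Real.log_pow]; norm_num
  have h1 : ∀ q ∈ n.primeFactors.filter (fun q => Nat.log 16 N < q), (1:ℝ) / q ≤ Real.log 16 / Real.log N := by
    intro q hq
    have hq' := (Finset.mem_filter.1 hq)
    have hq0 : (0:ℝ) < q := by exact_mod_cast (Nat.prime_of_mem_primeFactors hq'.1).pos
    have h2 : N < 16 ^ q := Nat.lt_pow_of_log_lt (by norm_num) hq'.2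
    have h3 : Real.log N ≤ Real.log ((16:ℝ) ^ q) := Real.log_le_log (by linarith) (by exact_mod_cast h2.le)
    rw [Real.log_pow] at h3
    rw [div_le_div_iff₀ hq0 hlN]
    linarith
  have h2 := Finset.sum_le_card_nsmul _ _ _ h1
  refine h2.trans ?_
  have h3 : (((n.primeFactors.filter (fun q => Nat.log 16 N < q)).card : ℕ) : ℝ) * Real.log 2 ≤ Real.log n := by
    have h4 : 2 ^ (n.primeFactors.filter (fun q => Nat.log 16 N < q)).card ≤ n := by
      calc _ ≤ 2 ^ n.primeFactors.card := Nat.pow_le_pow_right (by norm_num) (Finset.card_filter_le _ _)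
        _ ≤ ∏ p ∈ n.primeFactors, p :=
          Finset.pow_card_le_prod _ _ _ fun p hp => (Nat.prime_of_mem_primeFactors hp).two_le
        _ ≤ n := Nat.le_of_dvd hn (Nat.prod_primeFactors_dvd n)
    have : Real.log ((2:ℝ) ^ (n.primeFactors.filter (fun q => Nat.log 16 N < q)).card) ≤ Real.log n :=
      Real.log_le_log (by positivity) (by exact_mod_cast h4)
    rwa [Real.log_pow] at this
  rw [nsmul_eq_mul, hl16, mul_div_assoc', mul_div_assoc']
  apply div_le_div_of_nonneg_right _ hlN.le
  linarith

lemma aux_poly_s7 (f : Polynomial ℤ) : ∃ B : ℝ, 0 ≤ B ∧ ∀ N p : ℕ, 2 ≤ N → p ≤ N → 0 < p →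
    0 < f.eval (p:ℤ) → Real.log ((f.eval (p:ℤ)).toNat : ℝ) / Real.log N ≤ B := by
  set A : ℝ := 1 + ∑ i ∈ Finset.range (f.natDegree + 1), |(f.coeff i : ℝ)| with hA
  have hA1 : 1 ≤ A := by
    have : 0 ≤ ∑ i ∈ Finset.range (f.natDegree + 1), |(f.coeff i : ℝ)| :=
      Finset.sum_nonneg fun _ _ => abs_nonneg _
    linarith
  have hl2 : 0 < Real.log 2 := Real.log_pos (by norm_num)
  have hlA : 0 ≤ Real.log A := Real.log_nonneg hA1
  refine ⟨Real.log A / Real.log 2 + f.natDegree, by positivity, ?_⟩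
  intro N p hN hpN hp hf
  have hN2 : (2:ℝ) ≤ N := by exact_mod_cast hN
  have hlN : Real.log 2 ≤ Real.log N := Real.log_le_log (by norm_num) hN2
  have hlN0 : 0 < Real.log N := by linarith
  have h1 : ((f.eval (p:ℤ)).toNat : ℝ) = ((f.eval (p:ℤ) : ℤ) : ℝ) := by
    exact_mod_cast congrArg (fun z : ℤ => (z : ℝ)) (Int.toNat_of_nonneg hf.le)
  have h2 : ((f.eval (p:ℤ) : ℤ) : ℝ) ≤ A * (N:ℝ) ^ f.natDegree := by
    rw [Polynomial.eval_eq_sum_range]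
    push_cast
    calc ∑ i ∈ Finset.range (f.natDegree + 1), (f.coeff i : ℝ) * (p:ℝ) ^ i ≤
        ∑ i ∈ Finset.range (f.natDegree + 1), |(f.coeff i : ℝ)| * (N:ℝ) ^ f.natDegree := by
          refine Finset.sum_le_sum fun i hi => ?_
          have hi' : i ≤ f.natDegree := by have := Finset.mem_range.1 hi; omega
          have : (p:ℝ) ^ i ≤ (N:ℝ) ^ f.natDegree := by
            calc (p:ℝ) ^ i ≤ (N:ℝ) ^ i := by gcongr
              _ ≤ _ := pow_le_pow_right₀ (by linarith) hi'
          calc (f.coeff i : ℝ) * (p:ℝ) ^ i ≤ |(f.coeff i : ℝ)| * (p:ℝ) ^ i := by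
                gcongr; exact le_abs_self _
            _ ≤ _ := by gcongr
      _ ≤ _ := by
          rw [← Finset.sum_mul]
          gcongr
          linarith
  rw [h1, div_le_iff₀ hlN0]
  have h3 : Real.log ((f.eval (p:ℤ) : ℤ) : ℝ) ≤ Real.log (A * (N:ℝ) ^ f.natDegree) :=
    Real.log_le_log (by exact_mod_cast hf) h2
  rw [Real.log_mul (by linarith) (by positivity), Real.log_pow] at h3
  have h4 : Real.log A ≤ Real.log A / Real.log 2 * Real.log N := by
    rw [div_mul_eq_mul_div, le_div_iff₀ hl2]
    gcongr
  linarith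

/-- Theorem (Radomskii, Theorem 5, inequality (1)): for a primitive polynomial `f` with
positive leading coefficient mapping primes to positive integers,
`∑_{p ≤ x} (f(p)/φ(f(p)))^s ≤ exp(s log log(s+2) + Cs) π(x)`. -/
theorem sum_totient_ratio_polynomial_prime_pow_le (f : Polynomial ℤ)
    (hlead : 0 < f.leadingCoeff) (hcont : f.content = 1)
    (hpos : ∀ p : ℕ, p.Prime → 0 < f.eval (p : ℤ)) :
    ∃ C : ℝ, 0 < C ∧ ∀ x : ℝ, 2 ≤ x → ∀ s : ℕ, 0 < s →
      ∑ p ∈ (Finset.range (⌊x⌋₊ + 1)).filter Nat.Prime,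
          (((f.eval (p : ℤ)).toNat : ℝ) / (Nat.totient (f.eval (p : ℤ)).toNat : ℝ)) ^ s ≤
        Real.exp (s * Real.log (Real.log (s + 2)) + C * s) *
          (((Finset.range (⌊x⌋₊ + 1)).filter Nat.Prime).card : ℝ) := by
  obtain ⟨K, hK0, hK⟩ : ∃ K : ℝ, 0 ≤ K ∧
      ∀ Q : Finset ℕ, ∑ q ∈ Q, (1:ℝ) / (q * √(q:ℝ)) ≤ K := by
    have hsum : Summable (fun q : ℕ => (1:ℝ) / (q * √(q:ℝ))) := by
      have h := Real.summable_one_div_nat_rpow (p := 3 / 2) |>.2 (by norm_num)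
      refine h.congr fun q => ?_
      rcases Nat.eq_zero_or_pos q with rfl | hq
      · norm_num
      · have hq0 : (0:ℝ) < q := by exact_mod_cast hq
        rw [Real.sqrt_eq_rpow, show (3/2 : ℝ) = 1 + 1/2 by norm_num, Real.rpow_add hq0, Real.rpow_one]
    exact ⟨_, tsum_nonneg (fun q => by positivity), fun Q => hsum.sum_le_tsum Q (fun q _ => by positivity)⟩
  obtain ⟨B, hB0, hB⟩ := aux_poly_s7 f
  refine ⟨385 + 4 * B + 2 * K + 2 * f.natDegree * K, by positivity, ?_⟩
  intro x hx s hs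
  have hN : 2 ≤ ⌊x⌋₊ := Nat.le_floor (by exact_mod_cast hx)
  set N := ⌊x⌋₊ with hNdef
  set P := (Finset.range (N + 1)).filter Nat.Prime with hP
  set Q := (Finset.range (Nat.log 16 N + 1)).filter (fun q => q.Prime ∧ s < q) with hQ
  have hmid := aux_middle f hcont N hN s K hK Q (by
    intro q hq
    rw [hQ, Finset.mem_filter, Finset.mem_range] at hq
    exact ⟨hq.2.1, hq.2.2, by omega⟩)
  have hmert := aux_mertens_s7 s hs
  set LL := Real.log (Real.log (s + 2)) with hLL
  have hterm : ∀ p ∈ P, (((f.eval (p : ℤ)).toNat : ℝ) / (Nat.totient (f.eval (p : ℤ)).toNat : ℝ)) ^ s ≤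
      Real.exp (s * (LL + 5 + 4 * B + 2 * K)) *
      Real.exp (s * ∑ q ∈ Q.filter (fun q : ℕ => (q:ℤ) ∣ f.eval (p:ℤ)), (1:ℝ) / q) := by
    intro p hp
    rw [hP, Finset.mem_filter, Finset.mem_range] at hp
    have hf := hpos p hp.2
    set n := (f.eval (p:ℤ)).toNat with hn
    have hn0 : 0 < n := by omega
    have hnf : (n:ℤ) = f.eval (p:ℤ) := Int.toNat_of_nonneg hf.le
    have hr := aux_ratio_s7 n hn0 K hK
    have ht := aux_tail n N hn0 hN
    have hb := hB N p hN (by omega) hp.2.pos hf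
    have hsplit : ∑ q ∈ n.primeFactors, (1:ℝ) / q ≤
        ∑ q ∈ (Finset.range (s + 1)).filter Nat.Prime, (1:ℝ) / q +
        ∑ q ∈ Q.filter (fun q : ℕ => (q:ℤ) ∣ f.eval (p:ℤ)), (1:ℝ) / q +
        ∑ q ∈ n.primeFactors.filter (fun q => Nat.log 16 N < q), (1:ℝ) / q := by
      rw [← Finset.sum_filter_add_sum_filter_not n.primeFactors (fun q => Nat.log 16 N < q), add_comm]
      gcongr
      rw [← Finset.sum_filter_add_sum_filter_not
        (n.primeFactors.filter (fun q => ¬ Nat.log 16 N < q)) (fun q => q ≤ s)]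
      apply add_le_add
      · apply Finset.sum_le_sum_of_subset_of_nonneg
        · intro q hq
          simp only [Finset.mem_filter, Finset.mem_range] at hq ⊢
          exact ⟨by omega, Nat.prime_of_mem_primeFactors hq.1.1⟩
        · intros; positivity
      · apply Finset.sum_le_sum_of_subset_of_nonneg
        · intro q hq
          simp only [hQ, Finset.mem_filter, Finset.mem_range] at hq ⊢
          refine ⟨⟨by omega, Nat.prime_of_mem_primeFactors hq.1.1, by omega⟩, ?_⟩
          rw [← hnf]
          exact_mod_cast Nat.dvd_of_mem_primeFactors hq.1.1
        · intros; positivity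
    calc _ ≤ (Real.exp (∑ q ∈ n.primeFactors, (1:ℝ) / q + 2 * K)) ^ s := by gcongr
      _ = Real.exp (s * (∑ q ∈ n.primeFactors, (1:ℝ) / q + 2 * K)) := by rw [Real.exp_nat_mul]
      _ ≤ _ := by
        rw [← Real.exp_add, ← mul_add]
        apply Real.exp_le_exp.2
        apply mul_le_mul_of_nonneg_left _ (Nat.cast_nonneg s)
        rw [← hn] at hb
        linarith
  refine (Finset.sum_le_sum hterm).trans ?_
  rw [← Finset.mul_sum]
  refine (mul_le_mul_of_nonneg_left hmid (Real.exp_pos _).le).trans ?_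
  have hs1 : (1:ℝ) ≤ s := by exact_mod_cast hs
  have h380 : (380:ℝ) ≤ Real.exp (380 * s) := by
    have := Real.add_one_le_exp (380 * (s:ℝ))
    linarith
  calc Real.exp (s * (LL + 5 + 4 * B + 2 * K)) * (380 * (P.card : ℝ) * Real.exp (2 * f.natDegree * K * s))
      ≤ Real.exp (s * (LL + 5 + 4 * B + 2 * K)) *
        (Real.exp (380 * s) * (P.card : ℝ) * Real.exp (2 * f.natDegree * K * s)) := by gcongr
    _ = (Real.exp (s * (LL + 5 + 4 * B + 2 * K)) * Real.exp (380 * s) *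
          Real.exp (2 * f.natDegree * K * s)) * (P.card : ℝ) := by ring
    _ = _ := by
      rw [← Real.exp_add, ← Real.exp_add]
      congr 2
      ring
end
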